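/- arXiv:2309.08518 — 2 statements merged into one kernel-verified Lean document; each statement's English description precedes it below -/
import Mathlib

section
/- For a composition α of n, the fundamental quasisymmetric function expands into the dual immaculate basis as F_α = Σ_β L^{-1}_{α,β} 𝔖*_β, where the sum runs over all compositions β reachable from α in the immaculate descent graph 𝔇^n, and L^{-1}_{α,β} = Σ_𝒫 (−1)^{ℓ(𝒫)} prod(𝒫), the sum running over all directed paths 𝒫 from α to β in 𝔇^n. -/
open scoped BigOperators

namespace ColoredImm

variable {A : Type*}

/-- A *weak sentence* over the alphabet `A`: a finite list of words (words may be empty). -/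
abbrev Sentence (A : Type*) := List (List A)

/-- A genuine *sentence*: all of its words are nonempty. -/
def IsSentence (I : Sentence A) : Prop := ∀ w ∈ I, w ≠ []

/-- The size `|I|` of a sentence: its total number of letters. -/
def size (I : Sentence A) : ℕ := (I.map List.length).sum

/-- The word lengths `wℓ(I)` of a sentence. -/
def wl (I : Sentence A) : List ℕ := I.map List.length

/-- The flattening of a weak sentence: delete all empty words. -/
def flattenWS (I : Sentence A) : Sentence A := I.filter (fun w => !w.isEmpty)

/-- `Refines J I` means `J ⪯ I`: the sentence `I` can be obtained by concatenating
some adjacent words of `J` (so `J` is a refinement of `I`, and `I` a coarsening of `J`). -/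
def Refines (J I : Sentence A) : Prop :=
  ∃ P : List (Sentence A), (∀ p ∈ P, p ≠ []) ∧ P.flatten = J ∧ P.map List.flatten = I

/-! ### Fillings and colored immaculate tableaux -/

/-- An integer filling of a diagram, recorded row by row. -/
abbrev Filling := List (List ℕ)

/-- The entry of a filling at box `b = (row, column)` (0-indexed), with default `0`. -/
def entryAt (f : Filling) (b : ℕ × ℕ) : ℕ := (f.getD b.1 []).getD b.2 0

/-- `IsCIT I f`: `f` is a colored immaculate tableau of shape `I`; that is, `f` has the
same shape as the colored composition diagram of `I`, its entries are positive integers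
weakly increasing left to right along each row, and the entries in the first column are
strictly increasing from top to bottom. -/
def IsCIT (I : Sentence A) (f : Filling) : Prop :=
  f.map List.length = I.map List.length ∧
  (∀ row ∈ f, row.Chain' (· ≤ ·)) ∧
  (f.filterMap List.head?).Chain' (· < ·) ∧
  (∀ x ∈ f.flatten, 1 ≤ x)

/-- The colors (letters of `w`) of the boxes of one row whose entry (in `row`) is `v`,
read from left to right. -/
def rowWith (w : List A) (row : List ℕ) (v : ℕ) : List A :=
  ((w.zip row).filter (fun p => p.2 == v)).map Prod.fst

/-- The word of the type of a tableau at value `v`: the colors of all boxes with entry `v`,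
read left to right, from the bottom row up to the top row. -/
def typeWord (I : Sentence A) (f : Filling) (v : ℕ) : List A :=
  (((I.zip f).reverse).map (fun p => rowWith p.1 p.2 v)).flatten

/-- `HasType I f B` : the tableau `f` (of shape `I`) has type the weak sentence `B`,
i.e. for every positive integer `v`, the colors of the boxes of `f` containing `v`
(read left to right, bottom to top) form the `v`-th word of `B`. -/
def HasType (I : Sentence A) (f : Filling) (B : Sentence A) : Prop :=
  ∀ v, 1 ≤ v → typeWord I f v = B.getD (v - 1) []

/-- `K_{J,B}`: the number of colored immaculate tableaux of shape `J` and type `B`. -/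
noncomputable def KJB (J B : Sentence A) : ℕ :=
  Set.ncard {f : Filling | IsCIT J f ∧ HasType J f B}

/-! ### Standardization -/

/-- The list of boxes of a filling. -/
def boxes (f : Filling) : List (ℕ × ℕ) :=
  ((List.range f.length).map
    (fun r => (List.range (f.getD r []).length).map (fun j => (r, j)))).flatten

/-- `beforeB f b b'`: box `b` comes strictly before box `b'` in the type-reading order of `f`
(smaller entries first; among equal entries, lower rows first, and within a row left to right). -/
def beforeB (f : Filling) (b b' : ℕ × ℕ) : Bool :=
  entryAt f b < entryAt f b' ||
    (entryAt f b == entryAt f b' && (b'.1 < b.1 || (b.1 == b'.1 && b.2 < b'.2)))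

/-- The standardization of a filling: each box is renumbered (starting from `1`)
according to its position in the type-reading order. -/
def stdFill (f : Filling) : Filling :=
  (List.range f.length).map (fun r =>
    (List.range (f.getD r []).length).map (fun j =>
      1 + ((boxes f).filter (fun b' => beforeB f b' (r, j))).length))

/-- The number of boxes of a filling. -/
def nBoxes (f : Filling) : ℕ := f.flatten.length

/-- A filling of `n` boxes is standard when its entries are exactly `1, …, n`,
each appearing once. -/
def IsStandardF (f : Filling) : Prop := f.flatten.Perm (List.range' 1 (nBoxes f))

/-! ### Descents and the colored descent composition -/

/-- The (0-indexed) row containing the value `v` in a standard filling. -/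
def rowOf (f : Filling) (v : ℕ) : ℕ := f.findIdx (fun row => row.contains v)

/-- The sorted list of descents of a standard filling: those `i` with `1 ≤ i ≤ n-1`
such that `i+1` lies in a strictly lower row than `i`. -/
def descList (f : Filling) : List ℕ :=
  (List.range' 1 (nBoxes f - 1)).filter (fun i => decide (rowOf f i < rowOf f (i + 1)))

/-- The composition of `n` associated to a set of split positions `d_1 < … < d_k`:
`(d_1, d_2 - d_1, …, n - d_k)`. -/
def compOf (ds : List ℕ) (n : ℕ) : List ℕ :=
  List.zipWith (fun a b => b - a) (0 :: ds) (ds ++ [n])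

/-- Split a word into a sentence according to a composition. -/
def splitByComp : List A → List ℕ → List (List A)
  | _, [] => []
  | w, a :: rest => w.take a :: splitByComp (w.drop a) rest

/-- The color of the box containing the value `v` in a standard filling of shape `I`. -/
def colorOf [Inhabited A] (I : Sentence A) (f : Filling) (v : ℕ) : A :=
  (I.getD (rowOf f v) []).getD ((f.getD (rowOf f v) []).findIdx (fun x => x == v)) default

/-- The maximal word of the colored descent composition of a standard filling of shape `I`:
the colors of its boxes read in the order of their integer entries. -/
def readWord [Inhabited A] (I : Sentence A) (f : Filling) : List A :=
  (List.range (nBoxes f)).map (fun i => colorOf I f (i + 1))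

/-- The colored descent composition `co_A(U)` of a standard colored immaculate tableau:
read the colors of the boxes in the order of their entries, starting a new word
immediately after each descent. -/
def coA [Inhabited A] (I : Sentence A) (f : Filling) : Sentence A :=
  if nBoxes f = 0 then [] else splitByComp (readWord I f) (compOf (descList f) (nBoxes f))

/-- `L_{J,C}`: the number of standard colored immaculate tableaux of shape `J`
with colored descent composition `C`. -/
noncomputable def LJC [Inhabited A] (J C : Sentence A) : ℕ :=
  Set.ncard {f : Filling | IsCIT J f ∧ IsStandardF f ∧ coA J f = C}

/-! ### The colored quasisymmetric functions `QSym_A` -/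

/-- A (normal form of a) monomial in the partially commutative variables `x_{a,i}`:
a pair consisting of the list of words `(w_1, …, w_m)` and the list of (strictly
increasing, positive) second indices `(j_1 < … < j_m)`, representing
`x_{w_1,j_1} ⋯ x_{w_m,j_m}`. -/
abbrev Mono (A : Type*) := List (List A) × List ℕ

/-- A colored quasisymmetric "series": a formal linear combination of monomials,
recorded by its coefficient function.  `QSym_A` itself is the span of the colored
monomial functions `MQ I` inside this space. -/
abbrev QSymA (A : Type*) := Mono A → ℚ

/-- Validity of a monomial normal form: words and indices match up, the indices are
strictly increasing positive integers, and all words are nonempty. -/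
def ValidMono (m : Mono A) : Prop :=
  m.1.length = m.2.length ∧ m.2.Chain' (· < ·) ∧ (∀ j ∈ m.2, 1 ≤ j) ∧ ∀ w ∈ m.1, w ≠ []

open Classical in
/-- The colored monomial quasisymmetric function `M_I`: the sum of all monomials
`x_{w_1,j_1} ⋯ x_{w_m,j_m}` with `j_1 < … < j_m`, where `I = (w_1, …, w_m)`. -/
noncomputable def MQ (I : Sentence A) : QSymA A := fun m =>
  if m.1 = I ∧ ValidMono m then 1 else 0

/-- The largest entry of a filling. -/
def maxEntry (f : Filling) : ℕ := f.flatten.foldr max 0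

/-- The monomial `x_T` of a colored immaculate tableau `T = f` of shape `I`:
for `T` of type `B = (u_1, …, u_j)` it is `x_{u_1,1} x_{u_2,2} ⋯ x_{u_j,j}`
(empty words are skipped). -/
def monoOf (I : Sentence A) (f : Filling) : Mono A :=
  let vs := ((List.range (maxEntry f)).map (· + 1)).filter (fun v => !(typeWord I f v).isEmpty)
  (vs.map (typeWord I f), vs)

/-- The colored dual immaculate function `𝔖*_J = Σ_T x_T`, the sum of the monomials of all
colored immaculate tableaux `T` of shape `J` (its coefficient at a monomial `m` is the
number of such tableaux with `x_T = m`). -/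
noncomputable def dualImm (J : Sentence A) : QSymA A := fun m =>
  (Set.ncard {f : Filling | IsCIT J f ∧ monoOf J f = m} : ℚ)

/-- The colored fundamental quasisymmetric function `F_I = Σ_{J ⪯ I} M_J`. -/
noncomputable def FQ (I : Sentence A) : QSymA A :=
  ∑ᶠ J ∈ {J : Sentence A | Refines J I}, MQ J

/-! ### The colored immaculate descent graph -/

/-- Edges of the colored immaculate descent graph: a directed edge from `I` to `J` (`J ≠ I`)
whenever some standard colored immaculate tableau of shape `I` has colored descent
composition `J`. -/
def IsEdge [Inhabited A] (I J : Sentence A) : Prop := J ≠ I ∧ LJC I J ≠ 0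

/-- Directed paths from `I` to `K` in the colored immaculate descent graph, recorded by
their (nonempty) lists of successive vertices; the path `[I]` is the empty path at `I`. -/
def PathsFromTo [Inhabited A] (I K : Sentence A) : Set (List (Sentence A)) :=
  {p | p.head? = some I ∧ p.getLast? = some K ∧ p.Chain' IsEdge}

/-- The signed weight `(-1)^{ℓ(𝒫)} prod(𝒫)` of a directed path `𝒫`:
`ℓ(𝒫)` is its number of edges and `prod(𝒫)` the product of its edge weights `L_{I,J}`. -/
noncomputable def pathWeight [Inhabited A] (p : List (Sentence A)) : ℚ :=
  ((-1 : ℚ)) ^ (p.length - 1) * ((p.zip p.tail).map (fun e => (LJC e.1 e.2 : ℚ))).prod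

/-- `L⁻¹_{I,K} = Σ_𝒫 (-1)^{ℓ(𝒫)} prod(𝒫)`, summed over all directed paths `𝒫`
from `I` to `K` in the colored immaculate descent graph. -/
noncomputable def Linv [Inhabited A] (I K : Sentence A) : ℚ :=
  ∑ᶠ p ∈ PathsFromTo I K, pathWeight p

/-! ### The colored noncommutative symmetric functions `NSym_A` -/

/-- A formal series over the complete homogeneous basis `{H_I}` of `NSym_A`, recorded by its
coefficient function on (weak) sentences.  `NSym_A` itself consists of the finitely
supported elements supported on genuine sentences; see `InNSym`. -/
abbrev NSymA (A : Type*) := Sentence A → ℚ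

/-- Membership in `NSym_A` proper: finitely supported, and supported on genuine sentences. -/
def InNSym (f : NSymA A) : Prop :=
  (Function.support f).Finite ∧ ∀ I, f I ≠ 0 → IsSentence I

open Classical in
/-- The colored complete homogeneous noncommutative symmetric function
`H_I = H_{w_1} ⋯ H_{w_k}`. -/
noncomputable def Hd (I : Sentence A) : NSymA A := fun J => if J = I then 1 else 0

/-- `H_w` for a single word `w`, with `H_∅ = 1`. -/
noncomputable def Hw (w : List A) : NSymA A := if w.isEmpty then Hd [] else Hd [w]

/-- Multiplication in `NSym_A` (the concatenation product, extended to series):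
`H_I · H_J = H_{I ⬝ J}`. -/
def mulN (f g : NSymA A) : NSymA A := fun I =>
  ∑ j ∈ Finset.range (I.length + 1), f (I.take j) * g (I.drop j)

/-- The duality pairing `⟨·,·⟩ : NSym_A × QSym_A → ℚ`, determined by
`⟨H_I, M_J⟩ = δ_{I,J}`: the `M_I`-coefficient of a quasisymmetric function is its
coefficient on the monomial `x_{w_1,1} x_{w_2,2} ⋯ x_{w_k,k}`. -/
noncomputable def pairNQ (G : NSymA A) (F : QSymA A) : ℚ :=
  ∑ᶠ I ∈ {I : Sentence A | IsSentence I}, G I * F (I, List.range' 1 I.length)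

/-- All ways of splitting each word of a list of words into a prefix and a suffix. -/
def splitsOf : List (List A) → List (List (List A) × List (List A))
  | [] => [([], [])]
  | w :: ws =>
      (((splitsOf ws).map (fun p =>
        (List.range (w.length + 1)).map (fun t => (w.take t :: p.1, w.drop t :: p.2))))).flatten

/-- Restriction of a candidate monomial: keep only the nonempty words together with
their indices. -/
def restrictMono (ws : List (List A)) (js : List ℕ) : Mono A :=
  let ps := (ws.zip js).filter (fun p => !p.1.isEmpty)
  (ps.map Prod.fst, ps.map Prod.snd)

/-- The product of colored quasisymmetric series: the coefficient of a monomial in `F·G`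
is the sum, over all ways of writing each of its words as a concatenation of a word of a
monomial of `F` (on the left) and a word of a monomial of `G` (on the right), of the
products of the corresponding coefficients. -/
def mulQ (F G : QSymA A) : QSymA A := fun m =>
  ((splitsOf m.1).map (fun p => F (restrictMono p.1 m.2) * G (restrictMono p.2 m.2))).sum

/-- The right perp operator `M^⊸` of `M ∈ QSym_A`, the linear operator on `NSym_A`
determined by `⟨M^⊸(H), G⟩ = ⟨H, G·M⟩`; explicitly, for the dual bases `{M_I}` and `{H_I}`,
`M^⊸(H) = Σ_I ⟨H, M_I · M⟩ H_I`. -/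
noncomputable def rperp (M : QSymA A) (H : NSymA A) : NSymA A :=
  ∑ᶠ I ∈ {I : Sentence A | IsSentence I}, pairNQ H (mulQ (MQ I) M) • Hd I

/-- The colored noncommutative Bernstein operator
`𝔹_v = Σ_u Σ_{Q : w(Q^r) = u} (-1)^{ℓ(Q)} H_{v·u} · (Σ_{S ⪰ Q} M_S^⊸)`,
where `Q` runs over all sentences, `u = w(Q^r)` is the concatenation of the words of `Q`
in reverse order, and `S` runs over all coarsenings of `Q`. -/
noncomputable def Bern (v : List A) (f : NSymA A) : NSymA A :=
  ∑ᶠ Q ∈ {Q : Sentence A | IsSentence Q},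
    ((-1 : ℚ)) ^ Q.length •
      mulN (Hw (v ++ Q.reverse.flatten))
        (∑ᶠ S ∈ {S : Sentence A | Refines Q S}, rperp (MQ S) f)

/-- The colored immaculate function `𝔖_J = 𝔹_{v_1} 𝔹_{v_2} ⋯ 𝔹_{v_h}(1)`. -/
noncomputable def ImmS (J : Sentence A) : NSymA A := J.foldr Bern (Hd [])

/-- The colored ribbon function `R_I = Σ_{J ⪰ I} (-1)^{ℓ(J) - ℓ(I)} H_J`. -/
noncomputable def Rib (I : Sentence A) : NSymA A :=
  ∑ᶠ J ∈ {J : Sentence A | Refines I J}, ((-1 : ℚ)) ^ (I.length - J.length) • Hd J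

/-- The Pieri relation `J ⊂_w K` for a sentence `J = (v_1, …, v_h)` and a word `w`:
`K = (u_1, …, u_g)` with `h ≤ g ≤ h+1` (setting `v_{h+1} = ∅`) and `u_j = v_j · q_j`
for words `q_j` (possibly empty) whose reversed concatenation `q_g ⋯ q_1` equals `w`. -/
def PieriRel (J : Sentence A) (w : List A) (K : Sentence A) : Prop :=
  J.length ≤ K.length ∧ K.length ≤ J.length + 1 ∧
  ∃ q : List (List A), q.length = K.length ∧ q.reverse.flatten = w ∧
    ∀ j < K.length, K.getD j [] = J.getD j [] ++ q.getD j []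

/-- Right containment of a weak sentence `K` in `J`: same length, and each word of `K` is a
suffix of the corresponding word of `J`. -/
def RightContained (K J : Sentence A) : Prop :=
  K.length = J.length ∧ ∀ i < J.length, (K.getD i []).IsSuffix (J.getD i [])

/-- The weak sentence `J/_R K`: remove each word of `K` from the right end of the
corresponding word of `J`. -/
def rightQuot (J K : Sentence A) : Sentence A :=
  List.zipWith (fun v u => v.take (v.length - u.length)) J K

/-- Left containment `J ⊆_L I`: `ℓ(J) ≤ ℓ(I)` and each word of `J` is a prefix of the
corresponding word of `I`. -/
def LeftContained (J I : Sentence A) : Prop :=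
  J.length ≤ I.length ∧ ∀ i < J.length, (J.getD i []).IsPrefix (I.getD i [])

/-- A skew colored immaculate tableau of shape `I/J`: a filling of the active boxes
(the `i`-th row keeps the last `|w_i| - |v_i|` boxes) with positive integers, rows weakly
increasing left to right, and the entries in the (active part of the) first column of `I`
strictly increasing top to bottom. -/
def IsSkewCIT (I J : Sentence A) (f : Filling) : Prop :=
  f.map List.length =
    (List.range I.length).map (fun i => (I.getD i []).length - (J.getD i []).length) ∧
  (∀ row ∈ f, row.Chain' (· ≤ ·)) ∧
  ((List.range I.length).filterMap
    (fun i => if (J.getD i []).length = 0 then (f.getD i []).head? else none)).Chain' (· < ·) ∧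
  (∀ x ∈ f.flatten, 1 ≤ x)

/-- The word of the type of a skew tableau at value `v`: the colors of the active boxes with
entry `v`, read left to right, bottom to top. -/
def skewTypeWord (I J : Sentence A) (f : Filling) (v : ℕ) : List A :=
  (((List.range I.length).reverse).map (fun i =>
    rowWith ((I.getD i []).drop (J.getD i []).length) (f.getD i []) v)).flatten

/-- `SkewHasType I J f K` : the skew tableau `f` of shape `I/J` has type `K`. -/
def SkewHasType (I J : Sentence A) (f : Filling) (K : Sentence A) : Prop :=
  ∀ v, 1 ≤ v → skewTypeWord I J f v = K.getD (v - 1) []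

/-! ### The complement involution `ψ` and the row-strict functions -/

/-- The complement `I^c` of a sentence: the unique sentence with the same maximal word
that splits exactly where `I` does not. -/
def complSent (I : Sentence A) : Sentence A :=
  let w := I.flatten
  let n := w.length
  if n = 0 then []
  else
    let splits := (((wl I).scanl (· + ·) 0).drop 1).dropLast
    let csplits := (List.range' 1 (n - 1)).filter (fun i => !(splits.contains i))
    splitByComp w (compOf csplits n)

/-- The `M_I`-coefficient of a colored quasisymmetric function. -/
noncomputable def coeffM (G : QSymA A) (I : Sentence A) : ℚ := G (I, List.range' 1 I.length)

/-- The image of `M_I` under `ψ`, via `M_I = Σ_{J ⪯ I} (-1)^{ℓ(J)-ℓ(I)} F_J` and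
`ψ(F_J) = F_{J^c}`. -/
noncomputable def psiM (I : Sentence A) : QSymA A :=
  ∑ᶠ J ∈ {J : Sentence A | Refines J I}, ((-1 : ℚ)) ^ (J.length - I.length) • FQ (complSent J)

/-- The linear involution `ψ` of `QSym_A`, determined by `ψ(F_I) = F_{I^c}`. -/
noncomputable def psiQ (G : QSymA A) : QSymA A :=
  ∑ᶠ I ∈ {I : Sentence A | IsSentence I}, coeffM G I • psiM I

/-- A colored row-strict immaculate tableau of shape `I`: entries strictly increase left to
right along each row and weakly increase top to bottom down the first column. -/
def IsCRSIT (I : Sentence A) (f : Filling) : Prop :=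
  f.map List.length = I.map List.length ∧
  (∀ row ∈ f, row.Chain' (· < ·)) ∧
  (f.filterMap List.head?).Chain' (· ≤ ·) ∧
  (∀ x ∈ f.flatten, 1 ≤ x)

/-- The word of the type of a row-strict tableau at value `v`: the colors of the boxes with
entry `v`, read left to right, top to bottom. -/
def rsTypeWord (I : Sentence A) (f : Filling) (v : ℕ) : List A :=
  ((I.zip f).map (fun p => rowWith p.1 p.2 v)).flatten

/-- The monomial `x_T` of a colored row-strict immaculate tableau. -/
def rsMonoOf (I : Sentence A) (f : Filling) : Mono A :=
  let vs := ((List.range (maxEntry f)).map (· + 1)).filter (fun v => !(rsTypeWord I f v).isEmpty)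
  (vs.map (rsTypeWord I f), vs)

/-- The colored row-strict dual immaculate function `ℛ𝔖*_J = Σ_T x_T`, summed over all
colored row-strict immaculate tableaux `T` of shape `J`. -/
noncomputable def rsDualImm (J : Sentence A) : QSymA A := fun m =>
  (Set.ncard {f : Filling | IsCRSIT J f ∧ rsMonoOf J f = m} : ℚ)

/-- `α ⪰ β` in the reverse lexicographic order on compositions: at the first index where
they differ, `α` has the *smaller* entry (padding with zeros). -/
def RevLexGE (α β : List ℕ) : Prop :=
  α = β ∨ ∃ i, (∀ j < i, α.getD j 0 = β.getD j 0) ∧ α.getD i 0 < β.getD i 0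

/-! ### Uncolored (ordinary) versions, for `QSym` -/

namespace Uncolored

/-- A composition: a list of positive integers. -/
def IsComposition (α : List ℕ) : Prop := ∀ a ∈ α, 1 ≤ a

/-- `β ⪯ α`: the composition `α` is obtained by summing adjacent parts of `β`. -/
def RefinesC (β α : List ℕ) : Prop :=
  ∃ P : List (List ℕ), (∀ p ∈ P, p ≠ []) ∧ P.flatten = β ∧ P.map List.sum = α

/-- A monomial `x_{i_1}^{a_1} ⋯ x_{i_m}^{a_m}` recorded by its exponents and its
strictly increasing positive indices. -/
abbrev MonoU := List ℕ × List ℕ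

/-- A quasisymmetric "series", recorded by its coefficient function on monomials.
`QSym` is the span of the monomial functions `MU α` inside this space. -/
abbrev QSymU := MonoU → ℚ

/-- Validity of a monomial: matching lengths, strictly increasing positive indices,
positive exponents. -/
def ValidMonoU (m : MonoU) : Prop :=
  m.1.length = m.2.length ∧ m.2.Chain' (· < ·) ∧ (∀ j ∈ m.2, 1 ≤ j) ∧ ∀ a ∈ m.1, 1 ≤ a

open Classical in
/-- The monomial quasisymmetric function `M_α`. -/
noncomputable def MU (α : List ℕ) : QSymU := fun m =>
  if m.1 = α ∧ ValidMonoU m then 1 else 0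

/-- The fundamental quasisymmetric function `F_α = Σ_{β ⪯ α} M_β`. -/
noncomputable def FU (α : List ℕ) : QSymU :=
  ∑ᶠ β ∈ {β : List ℕ | RefinesC β α}, MU β

/-- An immaculate tableau of shape `α`: positive integer entries, rows weakly increasing
left to right, first column strictly increasing top to bottom. -/
def IsIT (α : List ℕ) (f : Filling) : Prop :=
  f.map List.length = α ∧
  (∀ row ∈ f, row.Chain' (· ≤ ·)) ∧
  (f.filterMap List.head?).Chain' (· < ·) ∧
  (∀ x ∈ f.flatten, 1 ≤ x)

/-- The number of boxes of `f` with entry `v`. -/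
def countOf (f : Filling) (v : ℕ) : ℕ := (f.flatten.filter (fun x => x == v)).length

/-- The monomial `x^T` of an immaculate tableau `T` of type `β`:
`x_1^{β_1} ⋯ x_h^{β_h}` (zero exponents skipped). -/
def monoOfU (f : Filling) : MonoU :=
  let vs := ((List.range (maxEntry f)).map (· + 1)).filter (fun v => decide (countOf f v ≠ 0))
  (vs.map (countOf f), vs)

/-- The dual immaculate function `𝔖*_α = Σ_T x^T`, summed over all immaculate tableaux
of shape `α`. -/
noncomputable def dualImmU (α : List ℕ) : QSymU := fun m =>
  (Set.ncard {f : Filling | IsIT α f ∧ monoOfU f = m} : ℚ)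

/-- The descent composition `co(U)` of a standard immaculate tableau. -/
def descComp (f : Filling) : List ℕ :=
  if nBoxes f = 0 then [] else compOf (descList f) (nBoxes f)

/-- `L_{α,β}`: the number of standard immaculate tableaux of shape `α` with descent
composition `β`. -/
noncomputable def LU (α β : List ℕ) : ℕ :=
  Set.ncard {f : Filling | IsIT α f ∧ IsStandardF f ∧ descComp f = β}

/-- Edges of the immaculate descent graph `𝔇^n`. -/
def IsEdgeU (α β : List ℕ) : Prop := β ≠ α ∧ LU α β ≠ 0

/-- Directed paths from `α` to `β` in the immaculate descent graph, recorded by their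
lists of successive vertices; `[α]` is the empty path at `α`. -/
def PathsU (α β : List ℕ) : Set (List (List ℕ)) :=
  {p | p.head? = some α ∧ p.getLast? = some β ∧ p.Chain' IsEdgeU}

/-- The signed weight `(-1)^{ℓ(𝒫)} prod(𝒫)` of a path. -/
noncomputable def pathWeightU (p : List (List ℕ)) : ℚ :=
  ((-1 : ℚ)) ^ (p.length - 1) * ((p.zip p.tail).map (fun e => (LU e.1 e.2 : ℚ))).prod

/-- `L⁻¹_{α,β} = Σ_𝒫 (-1)^{ℓ(𝒫)} prod(𝒫)`, over directed paths from `α` to `β` in `𝔇^n`. -/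
noncomputable def LinvU (α β : List ℕ) : ℚ :=
  ∑ᶠ p ∈ PathsU α β, pathWeightU p

end Uncolored

end ColoredImm

/-!
Reading the entries of an immaculate tableau of shape `α` in increasing order (equal entries from
bottom to top) and recording the row of each one gives a rearrangement `u` of the row word
`0⋯0 1⋯1 ⋯` of `α` in which every `r + 1` is preceded by an `r`, because the first column increases.
Conversely, such a word `u` and a sorted word of entries give a tableau exactly when the entries
increase strictly at every ascent of `u`. Hence `𝔖*_α = ∑_u F_{co(u)}`, where `co(u)` lists the
lengths of the maximal weakly decreasing runs of `u`, and the standard tableaux give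
`𝔖*_α = ∑_β L_{α,β} F_β`.

Along such a word `u` the largest letter read so far grows by at most one from each run to the
next, so `u` lies letterwise below the row word of `co(u)`. The sum of the letters of the row word
therefore increases strictly along the edges of `𝔇^n`, and `L_{α,α} = 1`. So `𝔇^n` is finite and
acyclic, and the unitriangular system `𝔖*_α = F_α + ∑_{α → β} L_{α,β} F_β` is inverted by
substituting repeatedly, each substitution extending the paths by one edge and contributing a sign.
-/

namespace ColoredImm.Uncolored

section Paths

variable {V R M : Type*} [CommRing R] [AddCommGroup M] [Module R M]
  {E : V → V → Prop} {w : V → V → R} {S : Finset V}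

/-- The directed paths from `a` to `b` along the edge relation `E`, as lists of vertices;
`PathsU` is the case `E = IsEdgeU`. -/
def paths (E : V → V → Prop) (a b : V) : Set (List V) :=
  {p | p.head? = some a ∧ p.getLast? = some b ∧ p.IsChain E}

/-- The signed weight `(-1)^ℓ(p) prod(p)` of a path `p`; `pathWeightU` is the case `w = LU`. -/
def signedWeight (w : V → V → R) (p : List V) : R :=
  (-1) ^ (p.length - 1) * ((p.zip p.tail).map fun e => w e.1 e.2).prod

/-- The sum of the signed weights of all paths from `a` to `b`; `LinvU` is the case
`E = IsEdgeU`, `w = LU`. -/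
noncomputable def pathSum (E : V → V → Prop) (w : V → V → R) (a b : V) : R :=
  ∑ᶠ p ∈ paths E a b, signedWeight w p

lemma signedWeight_singleton (a : V) : signedWeight w [a] = 1 := by
  simp [signedWeight]

lemma signedWeight_cons {a c : V} {p : List V} (hp : p.head? = some c) :
    signedWeight w (a :: p) = -w a c * signedWeight w p := by
  obtain ⟨q, rfl⟩ := List.head?_eq_some_iff.1 hp
  simp only [signedWeight, List.length_cons, Nat.add_sub_cancel, List.tail_cons, List.zip_cons_cons,
    List.map_cons, List.prod_cons, pow_succ]
  ring

lemma cons_mem_paths {a b c : V} {p : List V} (hac : E a c) (hp : p ∈ paths E c b) :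
    a :: p ∈ paths E a b := by
  obtain ⟨hhead, hlast, hchain⟩ := hp
  obtain ⟨q, rfl⟩ := List.head?_eq_some_iff.1 hhead
  exact ⟨rfl, hlast, List.isChain_cons_cons.2 ⟨hac, hchain⟩⟩

lemma paths_eq_union (a b : V) :
    paths E a b = {p | p = [a] ∧ a = b} ∪ ⋃ c ∈ {c | E a c}, List.cons a '' paths E c b := by
  ext p
  simp only [Set.mem_union, Set.mem_iUnion, Set.mem_ofPred_eq, Set.mem_image, exists_prop]
  constructor
  · rintro ⟨hhead, hlast, hchain⟩
    obtain ⟨q, rfl⟩ := List.head?_eq_some_iff.1 hhead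
    cases q with
    | nil => exact Or.inl ⟨rfl, by simpa using hlast⟩
    | cons c q =>
      rw [List.isChain_cons_cons] at hchain
      exact Or.inr ⟨c, hchain.1, c :: q, ⟨rfl, hlast, hchain.2⟩, rfl⟩
  · rintro (⟨rfl, rfl⟩ | ⟨c, hac, p, hp, rfl⟩)
    · exact ⟨rfl, rfl, List.isChain_singleton a⟩
    · exact cons_mem_paths hac hp

lemma mem_of_paths_nonempty {s : Set V} (hclosed : ∀ a ∈ s, ∀ b, E a b → b ∈ s) {a b : V}
    (ha : a ∈ s) (hab : (paths E a b).Nonempty) : b ∈ s := by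
  obtain ⟨p, hhead, hlast, hchain⟩ := hab
  have hmem : ∀ c ∈ p, c ∈ s := by
    refine hchain.induction (· ∈ s) p (fun c d hcd hc => hclosed c hc d hcd) fun hp => ?_
    rw [List.head?_eq_some_head hp] at hhead
    rwa [Option.some.inj hhead]
  exact hmem b (List.mem_of_getLast? hlast)

lemma finite_paths (hclosed : ∀ a ∈ S, ∀ b, E a b → b ∈ S)
    (hwf : (S : Set V).WellFoundedOn (flip E)) {a : V} (ha : a ∈ S) (b : V) :
    (paths E a b).Finite := by
  refine hwf.induction (P := fun a => (paths E a b).Finite) ha fun a ha ih => ?_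
  have hsucc : {c | E a c} ⊆ S := fun c => hclosed a ha c
  rw [paths_eq_union]
  exact ((Set.finite_singleton [a]).subset fun p hp => hp.1).union <|
    (S.finite_toSet.subset hsucc).biUnion fun c hac => (ih c (hsucc hac) hac).image _

lemma finsum_mem_image_cons {b c : V} (hfin : (paths E c b).Finite) (a : V) :
    ∑ᶠ p ∈ List.cons a '' paths E c b, signedWeight w p = -(w a c * pathSum E w c b) := by
  rw [finsum_mem_image List.cons_injective.injOn, ← neg_mul, pathSum, mul_finsum_mem' _ _ hfin]
  exact finsum_mem_congr rfl fun p hp => signedWeight_cons hp.1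

open Classical in
lemma pathSum_eq_ite_sub_sum (hclosed : ∀ a ∈ S, ∀ b, E a b → b ∈ S)
    (hwf : (S : Set V).WellFoundedOn (flip E)) {a : V} (ha : a ∈ S) (b : V) :
    pathSum E w a b = (if a = b then 1 else 0) - ∑ c ∈ S with E a c, w a c * pathSum E w c b := by
  have hsucc : {c | E a c} = ({c ∈ S | E a c} : Finset V) := by
    ext c
    simpa using hclosed a ha c
  have hfin : ∀ c ∈ {c | E a c}, (List.cons a '' paths E c b).Finite := fun c hac =>
    (finite_paths hclosed hwf (hclosed a ha c hac) b).image _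
  have hfin_trivial : {p | p = [a] ∧ a = b}.Finite :=
    (Set.finite_singleton [a]).subset fun p hp => hp.1
  have hfin_succ : {c | E a c}.Finite := hsucc ▸ Finset.finite_toSet _
  have hdisj : Disjoint {p | p = [a] ∧ a = b}
      (⋃ c ∈ {c | E a c}, List.cons a '' paths E c b) := by
    simp only [Set.disjoint_left, Set.mem_iUnion, Set.mem_image, not_exists, not_and]
    rintro _ ⟨rfl, -⟩ c - p hp hcons
    rw [List.cons_inj_right] at hcons
    simp [hcons, paths] at hp
  have hpairwise : {c | E a c}.PairwiseDisjoint fun c => List.cons a '' paths E c b := by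
    rintro c - d - hcd
    simp only [Function.onFun, Set.disjoint_left, Set.mem_image]
    rintro _ ⟨p, hp, rfl⟩ ⟨q, hq, hqp⟩
    rw [List.cons_inj_right] at hqp
    exact hcd (Option.some.inj (hp.1.symm.trans (hqp ▸ hq.1)))
  have htrivial : ∑ᶠ p ∈ {p | p = [a] ∧ a = b}, signedWeight w p = if a = b then 1 else 0 := by
    split_ifs with hab
    · simp [hab, signedWeight_singleton]
    · simp [hab]
  rw [pathSum, paths_eq_union, finsum_mem_union hdisj hfin_trivial (hfin_succ.biUnion hfin),
    finsum_mem_biUnion hpairwise hfin_succ hfin, htrivial, sub_eq_add_neg,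
    ← Finset.sum_neg_distrib, hsucc, finsum_mem_coe_finset]
  exact congrArg _ <| Finset.sum_congr rfl fun c hc =>
    finsum_mem_image_cons (finite_paths hclosed hwf (Finset.mem_filter.1 hc).1 b) a

open Classical in
lemma eq_sum_pathSum_smul (hclosed : ∀ a ∈ S, ∀ b, E a b → b ∈ S)
    (hwf : (S : Set V).WellFoundedOn (flip E)) {f s : V → M}
    (hs : ∀ a ∈ S, s a = f a + ∑ b ∈ S with E a b, w a b • f b) {a : V} (ha : a ∈ S) :
    f a = ∑ b ∈ S, pathSum E w a b • s b := by
  refine hwf.induction (P := fun a => f a = ∑ b ∈ S, pathSum E w a b • s b) ha fun a ha ih => ?_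
  rw [Finset.mem_coe] at ha
  have hsub : f a = s a - ∑ c ∈ S with E a c, w a c • ∑ b ∈ S, pathSum E w c b • s b := by
    rw [hs a ha, eq_sub_iff_add_eq, add_right_inj]
    refine Finset.sum_congr rfl fun c hc => ?_
    rw [Finset.mem_filter] at hc
    rw [ih c hc.1 hc.2]
  rw [hsub, eq_comm]
  simp only [pathSum_eq_ite_sub_sum hclosed hwf ha, sub_smul, Finset.sum_sub_distrib, ite_smul,
    one_smul, zero_smul, Finset.sum_ite_eq, ha, if_true, Finset.sum_smul, Finset.smul_sum, mul_smul]
  rw [Finset.sum_comm]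

open Classical in
theorem eq_finsum_pathSum_smul (hclosed : ∀ a ∈ S, ∀ b, E a b → b ∈ S)
    (hwf : (S : Set V).WellFoundedOn (flip E)) {f s : V → M}
    (hs : ∀ a ∈ S, s a = f a + ∑ b ∈ S with E a b, w a b • f b) {a : V} (ha : a ∈ S) :
    f a = ∑ᶠ b ∈ {b | (paths E a b).Nonempty}, pathSum E w a b • s b := by
  rw [eq_sum_pathSum_smul hclosed hwf hs ha]
  refine (finsum_mem_eq_sum_of_inter_support_eq _ ?_).symm
  ext b
  simp only [Set.mem_inter_iff, Set.mem_ofPred_eq, Finset.mem_coe, and_congr_left_iff]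
  refine fun hb => ⟨fun hab => mem_of_paths_nonempty hclosed ha hab, fun _ => ?_⟩
  contrapose! hb
  simp [pathSum, hb]

end Paths

/-- The lengths of the maximal runs of a list, consecutive letters `a`, `b` belonging to the same
run when `R a b`. -/
def runLengths {A : Type*} (R : A → A → Prop) [DecidableRel R] : List A → List ℕ
  | [] => []
  | [_] => [1]
  | a :: b :: l =>
    if R a b then (runLengths R (b :: l)).modifyHead (· + 1) else 1 :: runLengths R (b :: l)

section RunLengths

variable {A B : Type*} {R : A → A → Prop} [DecidableRel R] {S : B → B → Prop} [DecidableRel S]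

lemma runLengths_cons_cons_of_rel {a b : A} (hab : R a b) (l : List A) :
    runLengths R (a :: b :: l) = (runLengths R (b :: l)).modifyHead (· + 1) := by
  rw [runLengths, if_pos hab]

lemma runLengths_cons_cons_of_not_rel {a b : A} (hab : ¬R a b) (l : List A) :
    runLengths R (a :: b :: l) = 1 :: runLengths R (b :: l) := by
  rw [runLengths, if_neg hab]

variable (R) in
lemma exists_runLengths_cons (a : A) (l : List A) :
    ∃ k c, runLengths R (a :: l) = (k + 1) :: c := by
  induction l generalizing a with
  | nil => exact ⟨0, [], rfl⟩
  | cons b l ih =>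
    obtain ⟨k, c, hkc⟩ := ih b
    by_cases hab : R a b
    · exact ⟨k + 1, c, by rw [runLengths_cons_cons_of_rel hab, hkc, List.modifyHead_cons]⟩
    · exact ⟨0, _, runLengths_cons_cons_of_not_rel hab l⟩

lemma isComposition_cons {k : ℕ} {c : List ℕ} :
    IsComposition (k :: c) ↔ 1 ≤ k ∧ IsComposition c :=
  List.forall_mem_cons

variable (R) in
lemma isComposition_runLengths (l : List A) : IsComposition (runLengths R l) := by
  induction l with
  | nil => simp [runLengths, IsComposition]
  | cons a l ih =>
    cases l with
    | nil => simp [runLengths, IsComposition]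
    | cons b l =>
      obtain ⟨k, c, hkc⟩ := exists_runLengths_cons R b l
      by_cases hab : R a b
      · rw [hkc, isComposition_cons] at ih
        rw [runLengths_cons_cons_of_rel hab, hkc, List.modifyHead_cons, isComposition_cons]
        exact ⟨by omega, ih.2⟩
      · rw [runLengths_cons_cons_of_not_rel hab, isComposition_cons]
        exact ⟨le_rfl, ih⟩

variable (R) in
lemma sum_runLengths (l : List A) : (runLengths R l).sum = l.length := by
  induction l with
  | nil => rfl
  | cons a l ih =>
    cases l with
    | nil => rfl
    | cons b l =>
      obtain ⟨k, c, hkc⟩ := exists_runLengths_cons R b l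
      by_cases hab : R a b
      · rw [hkc, List.sum_cons] at ih
        rw [runLengths_cons_cons_of_rel hab, hkc, List.modifyHead_cons, List.sum_cons,
          List.length_cons]
        omega
      · rw [runLengths_cons_cons_of_not_rel hab, List.sum_cons, ih, add_comm]
        rfl

lemma runLengths_map (g : B → A) (l : List B) :
    runLengths R (l.map g) = runLengths (fun a b => R (g a) (g b)) l := by
  induction l with
  | nil => rfl
  | cons a l ih =>
    cases l with
    | nil => rfl
    | cons b l => simp only [List.map_cons, runLengths, ← ih]

/-- With `a = d = 0`, the left-hand side is `compOf` of the descent list `D`. For the induction, `a`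
is the last break before the current position `a + d + 1`. -/
lemma zipWith_sub_breaks (P : ℕ → ℕ → Prop) [DecidableRel P] (n a d : ℕ) :
    let D := (List.range' (a + d + 1) n).filter fun i => ¬P i (i + 1)
    List.zipWith (fun i j => j - i) (a :: D) (D ++ [a + d + 1 + n]) =
      (runLengths P (List.range' (a + d + 1) (n + 1))).modifyHead (· + d) := by
  induction n generalizing a d with
  | zero => simpa [runLengths] using by omega
  | succ n ih =>
    dsimp only at ih ⊢
    rw [List.range'_succ, List.range'_succ, List.range'_succ]
    by_cases hP : P (a + d + 1) (a + d + 1 + 1)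
    · rw [List.filter_cons_of_neg (by simpa using hP), runLengths_cons_cons_of_rel hP]
      have := ih a (d + 1)
      rw [← add_assoc a d 1, List.range'_succ] at this
      rw [show a + d + 1 + (n + 1) = a + d + 1 + 1 + n by ring, this, List.modifyHead_modifyHead]
      congr 1
      funext k
      simp only [Function.comp_apply]
      ring
    · rw [List.filter_cons_of_pos (by simpa using hP), runLengths_cons_cons_of_not_rel hP]
      have := ih (a + d + 1) 0
      rw [add_zero, List.range'_succ] at this
      rw [List.cons_append, List.zipWith_cons_cons,
        show a + d + 1 + (n + 1) = a + d + 1 + 1 + n by ring, this, List.modifyHead_cons]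
      congr 1
      · omega
      · exact congrFun List.modifyHead_id _

lemma descComp_eq_runLengths (f : Filling) :
    descComp f =
      runLengths (fun i j => rowOf f j ≤ rowOf f i) (List.range' 1 (nBoxes f)) := by
  rw [descComp]
  split_ifs with hn
  · rw [hn]; rfl
  · obtain ⟨n, hn⟩ := Nat.exists_eq_succ_of_ne_zero hn
    have := zipWith_sub_breaks (fun i j => rowOf f j ≤ rowOf f i) n 0 0
    simp only [not_le, zero_add] at this
    rw [hn, compOf, descList, hn, Nat.succ_eq_one_add, Nat.add_sub_cancel_left, this, add_comm n]
    exact congrFun List.modifyHead_id _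

lemma RefinesC.sum_eq {β α : List ℕ} (h : RefinesC β α) : β.sum = α.sum := by
  obtain ⟨P, -, rfl, rfl⟩ := h
  exact List.sum_flatten

lemma refinesC_cons {a : List ℕ} {k : ℕ} {c : List ℕ} :
    RefinesC a (k :: c) ↔ ∃ p q, a = p ++ q ∧ p ≠ [] ∧ p.sum = k ∧ RefinesC q c := by
  constructor
  · rintro ⟨P, hne, hflat, hmap⟩
    obtain ⟨p, P, rfl, rfl, rfl⟩ := List.map_eq_cons_iff.1 hmap
    rw [List.forall_mem_cons] at hne
    exact ⟨p, P.flatten, hflat.symm, hne.1, rfl, P, hne.2, rfl, rfl⟩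
  · rintro ⟨p, q, rfl, hp, rfl, P, hne, rfl, rfl⟩
    exact ⟨p :: P, List.forall_mem_cons.2 ⟨hp, hne⟩, rfl, rfl⟩

lemma refinesC_cons_cons {j k : ℕ} {a c : List ℕ} :
    RefinesC (j :: a) (k :: c) ↔ ∃ p q, a = p ++ q ∧ j + p.sum = k ∧ RefinesC q c := by
  rw [refinesC_cons]
  constructor
  · rintro ⟨_ | ⟨_, p⟩, q, heq, hp, hsum, hq⟩
    · exact absurd rfl hp
    · obtain ⟨rfl, rfl⟩ := List.cons.inj heq
      exact ⟨p, q, rfl, by simpa using hsum, hq⟩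
  · rintro ⟨p, q, rfl, hsum, hq⟩
    exact ⟨j :: p, q, rfl, List.cons_ne_nil _ _, by simpa using hsum, hq⟩

lemma refinesC_add_one_add_one {j k : ℕ} {a c : List ℕ} :
    RefinesC ((j + 1) :: a) ((k + 1) :: c) ↔ RefinesC (j :: a) (k :: c) := by
  simp only [refinesC_cons_cons, Nat.add_right_comm j, Nat.add_right_cancel_iff]

lemma not_refinesC_of_lt {j k : ℕ} {a c : List ℕ} (hkj : k < j) :
    ¬RefinesC (j :: a) (k :: c) := by
  rw [refinesC_cons_cons]
  rintro ⟨p, q, -, hsum, -⟩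
  omega

lemma refinesC_cons_self {k : ℕ} {a c : List ℕ} (ha : IsComposition a) :
    RefinesC (k :: a) (k :: c) ↔ RefinesC a c := by
  rw [refinesC_cons_cons]
  refine ⟨?_, fun h => ⟨[], a, rfl, rfl, h⟩⟩
  rintro ⟨_ | ⟨i, p⟩, q, rfl, hsum, hq⟩
  · exact hq
  · have := ha i (by simp)
    rw [List.sum_cons] at hsum
    omega

lemma refinesC_one_cons_add_two_cons {k : ℕ} {a c : List ℕ} :
    RefinesC (1 :: a) ((k + 2) :: c) ↔ RefinesC a ((k + 1) :: c) := by
  rw [refinesC_cons_cons, refinesC_cons]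
  refine exists₂_congr fun p q => and_congr_right fun _ => ⟨?_, ?_⟩
  · rintro ⟨hsum, hq⟩
    exact ⟨by rintro rfl; simp at hsum, by omega, hq⟩
  · rintro ⟨-, hsum, hq⟩
    exact ⟨by omega, hq⟩

theorem refinesC_runLengths_iff {x : List A} {y : List B} (hxy : x.length = y.length) :
    RefinesC (runLengths R x) (runLengths S y) ↔
      (x.zip y).IsChain fun p q => R p.1 q.1 → S p.2 q.2 := by
  induction x generalizing y with
  | nil =>
    obtain rfl := List.eq_nil_of_length_eq_zero hxy.symm
    simpa using ⟨[], by simp, rfl, rfl⟩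
  | cons a x ih =>
    obtain _ | ⟨c, y⟩ := y
    · simp at hxy
    rw [List.length_cons, List.length_cons, Nat.add_right_cancel_iff] at hxy
    match x, y, hxy with
    | [], [], _ => exact iff_of_true ⟨[[1]], by simp, rfl, rfl⟩ (List.isChain_singleton _)
    | b :: x, d :: y, hxy =>
      rw [List.zip_cons_cons, List.zip_cons_cons, List.isChain_cons_cons, ← List.zip_cons_cons,
        ← ih hxy]
      have hcomp := isComposition_runLengths R (b :: x)
      obtain ⟨j, r, hr⟩ := exists_runLengths_cons R b x
      obtain ⟨k, s, hs⟩ := exists_runLengths_cons S d y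
      by_cases hab : R a b <;> by_cases hcd : S c d
      · simp only [runLengths_cons_cons_of_rel, hab, hcd, hr, hs, List.modifyHead_cons,
          refinesC_add_one_add_one, forall_const, true_and]
      · simp only [runLengths_cons_cons_of_rel hab, runLengths_cons_cons_of_not_rel hcd, hr, hab,
          hcd, List.modifyHead_cons, forall_const, false_and, iff_false]
        exact not_refinesC_of_lt (by omega)
      · simp only [runLengths_cons_cons_of_not_rel hab, runLengths_cons_cons_of_rel hcd, hs, hab,
          List.modifyHead_cons, refinesC_one_cons_add_two_cons, false_imp_iff, true_and]
      · simp only [runLengths_cons_cons_of_not_rel hab, runLengths_cons_cons_of_not_rel hcd, hab,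
          refinesC_cons_self hcomp, false_imp_iff, true_and]

end RunLengths

/-- The word `j₁⋯j₁ j₂⋯j₂ ⋯` in which the `i`-th letter of `js` is repeated `aᵢ` times. -/
def blocks {A : Type*} (a : List ℕ) (js : List A) : List A :=
  (List.zipWith List.replicate a js).flatten

section Blocks

variable {A : Type*} {R : A → A → Prop} {a : List ℕ} {js : List A}

lemma blocks_cons_cons (k : ℕ) (a : List ℕ) (j : A) (js : List A) :
    blocks (k :: a) (j :: js) = List.replicate k j ++ blocks a js := rfl

lemma length_blocks (hlen : a.length = js.length) : (blocks a js).length = a.sum := by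
  induction a generalizing js with
  | nil => rfl
  | cons k a ih =>
    obtain _ | ⟨j, js⟩ := js
    · simp at hlen
    · rw [blocks_cons_cons, List.length_append, List.length_replicate, List.sum_cons,
        ih (by simpa using hlen)]

lemma mem_of_mem_blocks {v : A} (hv : v ∈ blocks a js) : v ∈ js := by
  obtain ⟨l, hl, hvl⟩ := List.mem_flatten.1 hv
  obtain ⟨i, hi, rfl⟩ := List.mem_iff_getElem.1 hl
  rw [List.getElem_zipWith] at hvl
  exact List.eq_of_mem_replicate hvl ▸ List.getElem_mem _

lemma mem_blocks (ha : IsComposition a) (hlen : a.length = js.length) {v : A} :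
    v ∈ blocks a js ↔ v ∈ js := by
  refine ⟨mem_of_mem_blocks, fun hv => ?_⟩
  obtain ⟨i, hi, rfl⟩ := List.mem_iff_getElem.1 hv
  have hai := ha a[i] (List.getElem_mem _)
  refine List.mem_flatten.2 ⟨List.replicate a[i] js[i], ?_, List.mem_replicate.2 ⟨by omega, rfl⟩⟩
  exact List.mem_iff_getElem.2 ⟨i, by simpa [hlen] using hi, List.getElem_zipWith⟩

lemma pairwise_blocks [Std.Refl R] (hjs : js.Pairwise R) : (blocks a js).Pairwise R := by
  induction a generalizing js with
  | nil => exact List.Pairwise.nil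
  | cons k a ih =>
    obtain _ | ⟨j, js⟩ := js
    · exact List.Pairwise.nil
    · rw [List.pairwise_cons] at hjs
      rw [blocks_cons_cons, List.pairwise_append, List.pairwise_replicate]
      refine ⟨Or.inr (refl j), ih hjs.2, fun x hx y hy => ?_⟩
      rw [List.eq_of_mem_replicate hx]
      exact hjs.1 y (mem_of_mem_blocks hy)

lemma map_count_blocks [DecidableEq A] (hjs : js.Nodup) (hlen : a.length = js.length) :
    js.map (blocks a js).count = a := by
  induction a generalizing js with
  | nil => simpa using hlen.symm
  | cons k a ih =>
    obtain _ | ⟨j, js⟩ := js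
    · simp at hlen
    · rw [List.nodup_cons] at hjs
      have hzero : (blocks a js).count j = 0 :=
        List.count_eq_zero.2 fun hj => hjs.1 (mem_of_mem_blocks hj)
      rw [List.map_cons, blocks_cons_cons, List.count_append, List.count_replicate_self, hzero]
      refine congrArg (k :: ·) (Eq.trans (List.map_congr_left fun v hv => ?_)
        (ih hjs.2 (by simpa using hlen)))
      rw [List.count_append, List.count_replicate, if_neg, zero_add]
      rintro hvj
      exact hjs.1 (beq_iff_eq.1 hvj ▸ hv)

lemma runLengths_blocks [DecidableRel R] [Std.Refl R] (hjs : js.IsChain fun i j => ¬R i j)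
    (ha : IsComposition a) (hlen : a.length = js.length) : runLengths R (blocks a js) = a := by
  induction a generalizing js with
  | nil => rfl
  | cons k a ih =>
    obtain _ | ⟨j, js⟩ := js
    · simp at hlen
    rw [isComposition_cons] at ha
    obtain ⟨k, rfl⟩ := Nat.exists_eq_add_of_le' ha.1
    have hrest := ih hjs.tail ha.2 (by simpa using hlen)
    rw [blocks_cons_cons]
    clear ih
    induction k with
    | succ k ihk =>
      rw [List.replicate_succ, List.replicate_succ, List.cons_append, List.cons_append,
        runLengths_cons_cons_of_rel (refl j), ← List.cons_append, ← List.replicate_succ,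
        ihk ⟨by omega, ha.2⟩ (by simpa using hlen), List.modifyHead_cons]
    | zero =>
      match a, js, hlen with
      | [], [], _ => rfl
      | i :: a, j' :: js, _ =>
        obtain ⟨i, rfl⟩ := Nat.exists_eq_add_of_le' (isComposition_cons.1 ha.2).1
        rw [List.tail_cons, blocks_cons_cons, List.replicate_succ, List.cons_append] at hrest
        rw [zero_add, List.replicate_one, List.singleton_append, blocks_cons_cons,
          List.replicate_succ, List.cons_append,
          runLengths_cons_cons_of_not_rel (List.isChain_cons_cons.1 hjs).1, hrest]

end Blocks

/-- The word whose letters are the row numbers, from `0`, of the boxes of the diagram of `α`,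
read row by row. -/
def rowWord (α : List ℕ) : List ℕ :=
  blocks α (List.range α.length)

/-- Every letter `r + 1` of the word is preceded by the letter `r`. Read along the entries of a
tableau, this is the condition on its first column. -/
def IsRestrictedGrowth (u : List ℕ) : Prop :=
  ∀ p r q, u = p ++ (r + 1) :: q → r ∈ p

open Classical in
/-- The words recording, entry by entry, the rows of the boxes of the immaculate tableaux of
shape `α`. -/
noncomputable def rowWords (α : List ℕ) : Finset (List ℕ) :=
  {u ∈ (rowWord α).permutations.toFinset | IsRestrictedGrowth u}

section RowWords

variable {α u : List ℕ}

lemma mem_rowWords : u ∈ rowWords α ↔ u.Perm (rowWord α) ∧ IsRestrictedGrowth u := by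
  simp [rowWords]

lemma length_rowWord (α : List ℕ) : (rowWord α).length = α.sum :=
  length_blocks List.length_range.symm

lemma pairwise_rowWord (α : List ℕ) : (rowWord α).Pairwise (· ≤ ·) :=
  pairwise_blocks (List.pairwise_lt_range.imp le_of_lt)

lemma runLengths_rowWord (hα : IsComposition α) : runLengths (· ≥ ·) (rowWord α) = α :=
  runLengths_blocks (List.isChain_range _ _ |>.2 fun i _ => by omega) hα List.length_range.symm

lemma lt_length_of_mem_rowWord {r : ℕ} (hr : r ∈ rowWord α) : r < α.length :=
  List.mem_range.1 (mem_of_mem_blocks hr)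

lemma isRestrictedGrowth_rowWord (hα : IsComposition α) : IsRestrictedGrowth (rowWord α) := by
  intro p r q hsplit
  have hlt := lt_length_of_mem_rowWord (α := α) (r := r + 1) (by simp [hsplit])
  have hr : r ∈ rowWord α :=
    (mem_blocks hα List.length_range.symm).2 (List.mem_range.2 (by omega))
  have hsorted := pairwise_rowWord α
  rw [hsplit, List.pairwise_append, List.pairwise_cons] at hsorted
  rw [hsplit, List.mem_append, List.mem_cons] at hr
  obtain hr | hr | hr := hr
  · exact hr
  · omega
  · have := hsorted.2.1.1 r hr
    omega

lemma blocks_runLengths_cons_cons (t r s : ℕ) (u : List ℕ) :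
    let a := runLengths (· ≥ ·) (r :: s :: u)
    let b := runLengths (· ≥ ·) (s :: u)
    blocks a (List.range' t a.length) =
      t :: blocks b (List.range' (if r ≥ s then t else t + 1) b.length) := by
  obtain ⟨k, c, hkc⟩ := exists_runLengths_cons (· ≥ ·) s u
  dsimp only
  split_ifs with hrs
  · rw [runLengths_cons_cons_of_rel (R := (· ≥ ·)) hrs, hkc, List.modifyHead_cons,
      List.length_cons, List.length_cons, List.range'_succ, blocks_cons_cons, blocks_cons_cons,
      List.replicate_succ, List.cons_append]
  · rw [runLengths_cons_cons_of_not_rel (R := (· ≥ ·)) hrs, List.length_cons, List.range'_succ,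
      blocks_cons_cons, List.replicate_one, List.singleton_append]

/-- Here `p` is the part of the word already read and `t` the number of the current run. If a letter
`r + 1` starts the next run, then `r` has been read before, so `r ≤ t` and `r + 1` is at most the
number of its own run. -/
lemma forall₂_le_blocks_runLengths {p : List ℕ} {s t : ℕ}
    (hgrowth : IsRestrictedGrowth (p ++ s :: u)) (hp : ∀ x ∈ p, x ≤ t) (hst : s ≤ t) :
    let a := runLengths (· ≥ ·) (s :: u)
    List.Forall₂ (· ≤ ·) (s :: u) (blocks a (List.range' t a.length)) := by
  induction u generalizing p s t with
  | nil => simpa [runLengths, blocks] using hst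
  | cons s' u ih =>
    dsimp only
    rw [blocks_runLengths_cons_cons]
    have hps : ∀ x ∈ p ++ [s], x ≤ t := by
      simpa [or_imp, forall_and] using ⟨hp, hst⟩
    refine List.Forall₂.cons hst (ih (p := p ++ [s]) (by simpa using hgrowth) ?_ ?_)
    · intro x hx
      have := hps x hx
      split_ifs <;> omega
    · split_ifs with hs's
      · omega
      · have hmem : s' - 1 ∈ p ++ [s] := hgrowth (p ++ [s]) (s' - 1) u (by
          rw [Nat.sub_add_cancel (by omega), List.append_assoc, List.singleton_append])
        have := hps _ hmem
        omega

lemma forall₂_le_rowWord_runLengths (hgrowth : IsRestrictedGrowth u) :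
    List.Forall₂ (· ≤ ·) u (rowWord (runLengths (· ≥ ·) u)) := by
  cases u with
  | nil => exact List.Forall₂.nil
  | cons s u =>
    rw [rowWord, List.range_eq_range']
    have hs : s = 0 := by
      by_contra hs
      have := hgrowth [] (s - 1) u (by rw [Nat.sub_add_cancel (by omega), List.nil_append])
      simp at this
    exact forall₂_le_blocks_runLengths (p := []) hgrowth (by simp) hs.le

lemma sum_lt_sum_of_forall₂_le {M : Type*} [AddCommMonoid M] [PartialOrder M]
    [IsOrderedCancelAddMonoid M] {l l' : List M} (hle : List.Forall₂ (· ≤ ·) l l') (hne : l ≠ l') :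
    l.sum < l'.sum := by
  induction hle with
  | nil => exact absurd rfl hne
  | @cons a b l l' hab hle ih =>
    rw [List.sum_cons, List.sum_cons]
    obtain rfl | hlt := hab.eq_or_lt
    · exact add_lt_add_right (ih fun h => hne (by rw [h])) a
    · exact add_lt_add_of_lt_of_le hlt hle.sum_le_sum

lemma eq_rowWord_of_runLengths_eq (hu : u ∈ rowWords α) (hco : runLengths (· ≥ ·) u = α) :
    u = rowWord α := by
  obtain ⟨hperm, hgrowth⟩ := mem_rowWords.1 hu
  by_contra hne
  have hle := forall₂_le_rowWord_runLengths hgrowth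
  rw [hco] at hle
  exact (sum_lt_sum_of_forall₂_le hle hne).ne hperm.sum_eq

lemma sum_rowWord_lt_of_runLengths_ne (hα : IsComposition α) (hu : u ∈ rowWords α)
    (hco : runLengths (· ≥ ·) u ≠ α) :
    (rowWord α).sum < (rowWord (runLengths (· ≥ ·) u)).sum := by
  obtain ⟨hperm, hgrowth⟩ := mem_rowWords.1 hu
  rw [← hperm.sum_eq]
  refine sum_lt_sum_of_forall₂_le (forall₂_le_rowWord_runLengths hgrowth) fun heq => hco ?_
  have hsorted : u.Pairwise (· ≤ ·) := heq ▸ pairwise_rowWord _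
  rw [hperm.eq_of_pairwise' hsorted (pairwise_rowWord α), runLengths_rowWord hα]

lemma filter_rowWords_runLengths_eq_self (hα : IsComposition α) :
    {u ∈ rowWords α | runLengths (· ≥ ·) u = α} = {rowWord α} := by
  ext u
  rw [Finset.mem_filter, Finset.mem_singleton]
  constructor
  · exact fun ⟨hu, hco⟩ => eq_rowWord_of_runLengths_eq hu hco
  · rintro rfl
    exact ⟨mem_rowWords.2 ⟨List.Perm.refl _, isRestrictedGrowth_rowWord hα⟩, runLengths_rowWord hα⟩

end RowWords

section Rows

/-- The row of index `r` of the filling whose boxes are given by the pairs `(entry, row)` in `Z`. -/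
def row (Z : List (ℕ × ℕ)) (r : ℕ) : List ℕ :=
  (Z.filter (·.2 = r)).map Prod.fst

/-- The filling with `k` rows whose boxes are given by the pairs `(entry, row)` in `Z`. -/
def fillingOf (k : ℕ) (Z : List (ℕ × ℕ)) : Filling :=
  (List.range k).map (row Z)

/-- The pairs `(entry, row)` given by the boxes of a filling with rows numbered from `t` on. -/
def boxes : ℕ → Filling → List (ℕ × ℕ)
  | _, [] => []
  | t, l :: f => l.map (·, t) ++ boxes (t + 1) f

variable {Z Z' : List (ℕ × ℕ)} {f : Filling} {k r t v : ℕ}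

lemma mem_row : v ∈ row Z r ↔ (v, r) ∈ Z := by
  simp [row]

lemma row_append : row (Z ++ Z') r = row Z r ++ row Z' r := by
  simp [row]

lemma row_eq_nil (hZ : ∀ p ∈ Z, p.2 ≠ r) : row Z r = [] := by
  simpa [row] using fun a b hab => hZ (a, b) hab

lemma row_map_mk (l : List ℕ) (t : ℕ) : row (l.map (·, t)) t = l := by
  simp [row, List.filter_map, Function.comp_def]

lemma map_mk_row (Z : List (ℕ × ℕ)) (t : ℕ) : (row Z t).map (·, t) = Z.filter (·.2 = t) := by
  rw [row, List.map_map]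
  refine (List.map_congr_left fun p hp => ?_).trans (List.map_id _)
  obtain rfl : p.2 = t := by simpa using (List.mem_filter.1 hp).2
  rfl

lemma map_fst_boxes (t : ℕ) (f : Filling) : (boxes t f).map Prod.fst = f.flatten := by
  induction f generalizing t with
  | nil => rfl
  | cons l f ih => simp [boxes, ih, Function.comp_def]

lemma map_snd_boxes (t : ℕ) (f : Filling) :
    (boxes t f).map Prod.snd = blocks (f.map List.length) (List.range' t f.length) := by
  induction f generalizing t with
  | nil => rfl
  | cons l f ih =>
    rw [List.map_cons, List.length_cons, List.range'_succ, blocks_cons_cons, ← ih]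
    simp [boxes, Function.comp_def]

lemma le_snd_of_mem_boxes {p : ℕ × ℕ} (hp : p ∈ boxes t f) : t ≤ p.2 := by
  have := List.mem_map_of_mem (f := Prod.snd) hp
  rw [map_snd_boxes] at this
  exact (List.mem_range'_1.1 (mem_of_mem_blocks this)).1

lemma map_row_boxes (t : ℕ) (f : Filling) : (List.range' t f.length).map (row (boxes t f)) = f := by
  induction f generalizing t with
  | nil => rfl
  | cons l f ih =>
    rw [List.length_cons, List.range'_succ, List.map_cons, boxes, row_append, row_map_mk,
      row_eq_nil fun p hp => ((Nat.lt_succ_self t).trans_le (le_snd_of_mem_boxes hp)).ne',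
      List.append_nil]
    refine congrArg (l :: ·) (Eq.trans (List.map_congr_left fun r hr => ?_) (ih (t + 1)))
    have htr : t < r := (List.mem_range'_1.1 hr).1
    rw [row_append, row_eq_nil (by simp [htr.ne]), List.nil_append]

lemma fillingOf_boxes (f : Filling) : fillingOf f.length (boxes 0 f) = f := by
  rw [fillingOf, List.range_eq_range', map_row_boxes]

lemma boxes_map_row_perm (hZ : ∀ p ∈ Z, t ≤ p.2 ∧ p.2 < t + k) :
    (boxes t ((List.range' t k).map (row Z))).Perm Z := by
  induction k generalizing t Z with
  | zero =>
    obtain rfl : Z = [] := List.eq_nil_iff_forall_not_mem.2 fun p hp => by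
      have := hZ p hp
      omega
    exact List.Perm.nil
  | succ k ih =>
    have hrest : ∀ p ∈ Z.filter (¬·.2 = t), t + 1 ≤ p.2 ∧ p.2 < t + 1 + k := fun p hp => by
      simp only [List.mem_filter, decide_eq_true_eq] at hp
      have := hZ p hp.1
      omega
    have hrow : ∀ r ∈ List.range' (t + 1) k, row Z r = row (Z.filter (¬·.2 = t)) r := fun r hr => by
      rw [List.mem_range'_1] at hr
      rw [row, row, List.filter_filter]
      refine congrArg _ (List.filter_congr fun p _ => ?_)
      grind
    rw [List.range'_succ, List.map_cons, boxes, map_mk_row, List.map_congr_left hrow]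
    refine ((ih hrest).append_left _).trans ?_
    simpa using List.filter_append_perm (·.2 = t) Z

lemma boxes_fillingOf_perm (hZ : ∀ p ∈ Z, p.2 < k) : (boxes 0 (fillingOf k Z)).Perm Z := by
  rw [fillingOf, List.range_eq_range']
  exact boxes_map_row_perm fun p hp => ⟨p.2.zero_le, by simpa using hZ p hp⟩

lemma flatten_fillingOf_perm (hZ : ∀ p ∈ Z, p.2 < k) :
    (fillingOf k Z).flatten.Perm (Z.map Prod.fst) := by
  rw [← map_fst_boxes 0]
  exact (boxes_fillingOf_perm hZ).map _

lemma length_row (Z : List (ℕ × ℕ)) (r : ℕ) : (row Z r).length = (Z.map Prod.snd).count r := by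
  rw [row, List.length_map, List.count, List.countP_map, List.countP_eq_length_filter]
  rfl

end Rows

section Tableaux

/-- The order in which the boxes of a tableau, given as pairs `(entry, row)`, are listed: by
increasing entry, boxes with equal entries being read from bottom to top. -/
def ReadsBefore (p q : ℕ × ℕ) : Prop :=
  p.1 < q.1 ∨ p.1 = q.1 ∧ q.2 ≤ p.2

instance : DecidableRel ReadsBefore := fun p q =>
  inferInstanceAs (Decidable (p.1 < q.1 ∨ p.1 = q.1 ∧ q.2 ≤ p.2))

instance : Std.Total ReadsBefore := ⟨fun p q => by unfold ReadsBefore; omega⟩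

instance : IsTrans (ℕ × ℕ) ReadsBefore := ⟨fun p q s => by unfold ReadsBefore; omega⟩

instance : Std.Antisymm ReadsBefore :=
  ⟨fun p q hpq hqp => by unfold ReadsBefore at hpq hqp; ext <;> omega⟩

variable {α u x : List ℕ} {f : Filling} {Z : List (ℕ × ℕ)}

lemma pairwise_row (hZ : Z.Pairwise ReadsBefore) (r : ℕ) : (row Z r).Pairwise (· ≤ ·) :=
  List.pairwise_map.2 <| (hZ.filter _).imp fun h => by unfold ReadsBefore at h; omega

/-- The right-hand side depends only on which entries each row has, not on their order. -/
lemma isChain_lt_head?_iff (hne : ∀ l ∈ f, l ≠ []) (hsorted : ∀ l ∈ f, l.Pairwise (· ≤ ·)) :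
    (f.filterMap List.head?).IsChain (· < ·) ↔
      f.IsChain fun l l' => ∀ v ∈ l', ∃ v' ∈ l, v' < v := by
  induction f with
  | nil => simp
  | cons l f ih =>
    rw [List.forall_mem_cons] at hne hsorted
    replace ih := ih hne.2 hsorted.2
    obtain _ | ⟨a, l⟩ := l
    · exact absurd rfl hne.1
    obtain _ | ⟨_ | ⟨b, l'⟩, f⟩ := f
    · simp
    · exact absurd rfl (hne.2 [] (by simp))
    have hhead : a < b ↔ ∀ v ∈ b :: l', ∃ v' ∈ a :: l, v' < v := by
      have ha := (List.pairwise_cons.1 hsorted.1).1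
      have hb := (List.pairwise_cons.1 (hsorted.2 (b :: l') (by simp))).1
      constructor
      · intro hab v hv
        obtain rfl | hv := List.mem_cons.1 hv
        · exact ⟨a, by simp, hab⟩
        · exact ⟨a, by simp, hab.trans_le (hb v hv)⟩
      · intro h
        obtain ⟨v', hv', hlt⟩ := h b (by simp)
        obtain rfl | hv' := List.mem_cons.1 hv'
        · exact hlt
        · exact (ha v' hv').trans_lt hlt
    simp only [List.filterMap_cons, List.head?_cons, List.isChain_cons_cons] at ih ⊢
    rw [ih, hhead]

lemma isChain_fillingOf_iff {k : ℕ} (hZ : Z.Pairwise ReadsBefore) (hk : ∀ p ∈ Z, p.2 < k) :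
    ((fillingOf k Z).IsChain fun l l' => ∀ v ∈ l', ∃ v' ∈ l, v' < v) ↔
      IsRestrictedGrowth (Z.map Prod.snd) := by
  rw [fillingOf, List.isChain_map, List.isChain_range]
  simp only [mem_row]
  constructor
  · intro h p r q hsplit
    obtain ⟨P, Q, rfl, rfl, hQ⟩ := List.map_eq_append_iff.1 hsplit
    obtain ⟨⟨v, _⟩, Q, rfl, rfl : _ = r + 1, rfl⟩ := List.map_eq_cons_iff.1 hQ
    obtain ⟨v', hv', hlt⟩ := h r (by have := hk (v, r + 1) (by simp); omega) v (by simp)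
    rw [List.mem_append, List.mem_cons] at hv'
    obtain hv' | hv' | hv' := hv'
    · exact List.mem_map_of_mem hv'
    · simp at hv'
    · have := (List.pairwise_cons.1 (List.pairwise_append.1 hZ).2.1).1 _ hv'
      unfold ReadsBefore at this
      omega
  · intro h r hr v hv
    obtain ⟨P, Q, rfl⟩ := List.append_of_mem hv
    have hmem := h (P.map Prod.snd) r (Q.map Prod.snd) (by simp)
    obtain ⟨⟨v', _⟩, hv', rfl⟩ := List.mem_map.1 hmem
    have := (List.pairwise_append.1 hZ).2.2 _ hv' _ (List.mem_cons_self)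
    unfold ReadsBefore at this
    exact ⟨v', List.mem_append_left _ hv', by omega⟩

lemma lt_length_of_mem (hu : Z.map Prod.snd ∈ rowWords α) : ∀ p ∈ Z, p.2 < α.length := fun _ hp =>
  lt_length_of_mem_rowWord ((mem_rowWords.1 hu).1.subset (List.mem_map_of_mem hp))

lemma map_length_fillingOf (hu : Z.map Prod.snd ∈ rowWords α) :
    (fillingOf α.length Z).map List.length = α := by
  rw [fillingOf, List.map_map]
  refine Eq.trans (List.map_congr_left fun r _ => ?_)
    (map_count_blocks List.nodup_range List.length_range.symm)
  rw [Function.comp_apply, length_row]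
  exact (mem_rowWords.1 hu).1.count_eq r

lemma ne_nil_of_map_length_eq (hα : IsComposition α) (hf : f.map List.length = α) :
    ∀ l ∈ f, l ≠ [] := by
  rintro l hl rfl
  have := hα 0 (hf ▸ List.mem_map_of_mem (f := List.length) hl)
  omega

lemma isIT_fillingOf (hα : IsComposition α) (hZ : Z.Pairwise ReadsBefore)
    (hu : Z.map Prod.snd ∈ rowWords α) (hpos : ∀ v ∈ Z.map Prod.fst, 1 ≤ v) :
    IsIT α (fillingOf α.length Z) := by
  have hlt := lt_length_of_mem hu
  have hlength := map_length_fillingOf hu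
  have hsorted : ∀ l ∈ fillingOf α.length Z, l.Pairwise (· ≤ ·) :=
    List.forall_mem_map.2 fun r _ => pairwise_row hZ r
  refine ⟨hlength, fun l hl => (hsorted l hl).isChain, ?_, fun v hv => ?_⟩
  · change List.IsChain _ _
    rw [isChain_lt_head?_iff (ne_nil_of_map_length_eq hα hlength) hsorted,
      isChain_fillingOf_iff hZ hlt]
    exact (mem_rowWords.1 hu).2
  · exact hpos v ((flatten_fillingOf_perm hlt).subset hv)

lemma fillingOf_eq_of_perm_boxes (hf : ∀ l ∈ f, l.Pairwise (· ≤ ·)) (hZ : Z.Pairwise ReadsBefore)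
    (hperm : Z.Perm (boxes 0 f)) : fillingOf f.length Z = f := by
  conv_rhs => rw [← fillingOf_boxes f]
  refine List.map_congr_left fun r hr => ?_
  have hrow : row (boxes 0 f) r ∈ fillingOf f.length (boxes 0 f) := List.mem_map_of_mem hr
  rw [fillingOf_boxes] at hrow
  exact ((hperm.filter _).map _).eq_of_pairwise' (pairwise_row hZ r) (hf _ hrow)

lemma exists_fillingOf_eq (hα : IsComposition α) (hf : IsIT α f) :
    ∃ Z, Z.Pairwise ReadsBefore ∧ (Z.map Prod.fst).Perm f.flatten ∧
      Z.map Prod.snd ∈ rowWords α ∧ fillingOf α.length Z = f := by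
  obtain ⟨hlength, hrows, hcol, -⟩ := hf
  have hsorted : ∀ l ∈ f, l.Pairwise (· ≤ ·) := fun l hl => List.IsChain.pairwise (hrows l hl)
  have hlen : f.length = α.length := by rw [← hlength, List.length_map]
  have hperm := List.perm_insertionSort ReadsBefore (boxes 0 f)
  have hZ := List.pairwise_insertionSort ReadsBefore (boxes 0 f)
  set Z := (boxes 0 f).insertionSort ReadsBefore
  have heq : fillingOf α.length Z = f := hlen ▸ fillingOf_eq_of_perm_boxes hsorted hZ hperm
  have hsnd : (Z.map Prod.snd).Perm (rowWord α) := by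
    rw [rowWord, ← hlen, List.range_eq_range', ← hlength, ← map_snd_boxes]
    exact hperm.map _
  refine ⟨Z, hZ, map_fst_boxes 0 f ▸ hperm.map _, mem_rowWords.2 ⟨hsnd, ?_⟩, heq⟩
  have hlt : ∀ p ∈ Z, p.2 < α.length := fun p hp =>
    lt_length_of_mem_rowWord (hsnd.subset (List.mem_map_of_mem hp))
  rw [← isChain_fillingOf_iff hZ hlt, heq,
    ← isChain_lt_head?_iff (ne_nil_of_map_length_eq hα hlength) hsorted]
  exact hcol

theorem bijOn_fillingOf (hα : IsComposition α) (hx : x.Pairwise (· ≤ ·)) (hpos : ∀ v ∈ x, 1 ≤ v) :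
    Set.BijOn (fun u => fillingOf α.length (x.zip u))
      {u | u ∈ rowWords α ∧ x.length = u.length ∧ (x.zip u).Pairwise ReadsBefore}
      {f | IsIT α f ∧ f.flatten.Perm x} := by
  refine ⟨?_, ?_, ?_⟩
  · rintro u ⟨hu, hlen, hZ⟩
    have hfst : (x.zip u).map Prod.fst = x := List.map_fst_zip hlen.le
    rw [← List.map_snd_zip hlen.ge] at hu
    exact ⟨isIT_fillingOf hα hZ hu (hfst.symm ▸ hpos),
      (flatten_fillingOf_perm (lt_length_of_mem hu)).trans (.of_eq hfst)⟩
  · rintro u ⟨hu, hlen, hZ⟩ u' ⟨hu', hlen', hZ'⟩ heq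
    rw [← List.map_snd_zip hlen.ge] at hu ⊢
    rw [← List.map_snd_zip hlen'.ge] at hu' ⊢
    dsimp only at heq
    have hperm := (boxes_fillingOf_perm (lt_length_of_mem hu)).symm.trans
      (heq ▸ boxes_fillingOf_perm (lt_length_of_mem hu'))
    rw [hperm.eq_of_pairwise' hZ hZ']
  · rintro f ⟨hf, hperm⟩
    obtain ⟨Z, hZ, hfst, hsnd, rfl⟩ := exists_fillingOf_eq hα hf
    have hsorted : (Z.map Prod.fst).Pairwise (· ≤ ·) := List.pairwise_map.2 <|
      hZ.imp fun h => by unfold ReadsBefore at h; omega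
    obtain rfl : Z.map Prod.fst = x := (hfst.trans hperm).eq_of_pairwise' hsorted hx
    have hzip : (Z.map Prod.fst).zip (Z.map Prod.snd) = Z := (List.zip_of_prod rfl rfl).symm
    exact ⟨Z.map Prod.snd, ⟨hsnd, by simp, hzip.symm ▸ hZ⟩, congrArg (fillingOf α.length) hzip⟩

end Tableaux

section Monomials

variable {α u : List ℕ} {f : Filling} {m : MonoU}

lemma countOf_eq_count (f : Filling) (v : ℕ) : countOf f v = f.flatten.count v := by
  rw [countOf, List.count, List.countP_eq_length_filter]

lemma fst_monoOfU (f : Filling) : (monoOfU f).1 = (monoOfU f).2.map f.flatten.count :=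
  List.map_congr_left fun v _ => countOf_eq_count f v

lemma mem_snd_monoOfU {v : ℕ} : v ∈ (monoOfU f).2 ↔ 1 ≤ v ∧ v ∈ f.flatten := by
  simp only [monoOfU, List.mem_filter, List.mem_map, List.mem_range, decide_eq_true_eq,
    countOf_eq_count, ← Nat.pos_iff_ne_zero, List.count_pos_iff]
  refine and_congr_left fun hv => ⟨?_, fun hpos => ⟨v - 1, ?_, by omega⟩⟩
  · rintro ⟨w, -, rfl⟩
    omega
  · have : v ≤ maxEntry f := List.le_max_of_le hv le_rfl
    omega

lemma pairwise_snd_monoOfU (f : Filling) : (monoOfU f).2.Pairwise (· < ·) :=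
  (List.pairwise_map.2 (List.pairwise_lt_range.imp fun h => by omega)).filter _

lemma ValidMonoU.pairwise_snd (hm : ValidMonoU m) : m.2.Pairwise (· < ·) :=
  List.IsChain.pairwise hm.2.1

lemma validMonoU_monoOfU (f : Filling) : ValidMonoU (monoOfU f) := by
  refine ⟨by rw [fst_monoOfU, List.length_map], (pairwise_snd_monoOfU f).isChain,
    fun j hj => (mem_snd_monoOfU.1 hj).1, ?_⟩
  rw [fst_monoOfU, List.forall_mem_map]
  exact fun v hv => List.count_pos_iff.2 (mem_snd_monoOfU.1 hv).2

lemma flatten_perm_blocks_monoOfU (hf : ∀ v ∈ f.flatten, 1 ≤ v) :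
    f.flatten.Perm (blocks (monoOfU f).1 (monoOfU f).2) := by
  have hcount := map_count_blocks (pairwise_snd_monoOfU f).nodup (validMonoU_monoOfU f).1
  conv_rhs at hcount => rw [fst_monoOfU]
  rw [List.map_inj_left] at hcount
  refine List.perm_iff_count.2 fun v => ?_
  by_cases hv : v ∈ (monoOfU f).2
  · exact (hcount v hv).symm
  · rw [List.count_eq_zero.2 fun hvf => hv (mem_snd_monoOfU.2 ⟨hf v hvf, hvf⟩),
      List.count_eq_zero.2 fun hvb => hv (mem_of_mem_blocks hvb)]

lemma monoOfU_eq_of_flatten_perm (hm : ValidMonoU m) (hperm : f.flatten.Perm (blocks m.1 m.2)) :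
    monoOfU f = m := by
  have hsnd : (monoOfU f).2 = m.2 := by
    refine List.Perm.eq_of_pairwise' (pairwise_snd_monoOfU f) hm.pairwise_snd ?_
    rw [List.perm_ext_iff_of_nodup (pairwise_snd_monoOfU f).nodup hm.pairwise_snd.nodup]
    intro v
    rw [mem_snd_monoOfU, hperm.mem_iff, mem_blocks hm.2.2.2 hm.1, and_iff_right_iff_imp]
    exact hm.2.2.1 v
  refine Prod.ext ?_ hsnd
  rw [fst_monoOfU, hsnd]
  exact (List.map_congr_left fun v _ => hperm.count_eq v).trans
    (map_count_blocks hm.pairwise_snd.nodup hm.1)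

lemma monoOfU_eq_iff (hf : ∀ v ∈ f.flatten, 1 ≤ v) (hm : ValidMonoU m) :
    monoOfU f = m ↔ f.flatten.Perm (blocks m.1 m.2) :=
  ⟨fun h => h ▸ flatten_perm_blocks_monoOfU hf, monoOfU_eq_of_flatten_perm hm⟩

lemma ValidMonoU.pairwise_blocks (hm : ValidMonoU m) : (blocks m.1 m.2).Pairwise (· ≤ ·) :=
  Uncolored.pairwise_blocks (hm.pairwise_snd.imp le_of_lt)

lemma ValidMonoU.runLengths_blocks (hm : ValidMonoU m) :
    runLengths (· = ·) (blocks m.1 m.2) = m.1 :=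
  Uncolored.runLengths_blocks (hm.2.1.imp fun _ _ => ne_of_lt) hm.2.2.2 hm.1

lemma pairwise_readsBefore_zip_iff {x : List ℕ} (hx : x.Pairwise (· ≤ ·))
    (hlen : x.length = u.length) :
    (x.zip u).Pairwise ReadsBefore ↔ RefinesC (runLengths (· = ·) x) (runLengths (· ≥ ·) u) := by
  have hfst : (x.zip u).IsChain fun p q => p.1 ≤ q.1 := by
    rw [← List.isChain_map (R := (· ≤ ·)) Prod.fst, List.map_fst_zip hlen.le]
    exact hx.isChain
  rw [refinesC_runLengths_iff hlen, ← List.isChain_iff_pairwise]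
  rw [List.isChain_iff_getElem] at hfst ⊢
  rw [List.isChain_iff_getElem]
  refine forall₂_congr fun i hi => ?_
  have := hfst i hi
  unfold ReadsBefore
  omega

end Monomials

section Expansion

variable {α β u : List ℕ} {Z : List (ℕ × ℕ)} {f : Filling} {k n : ℕ}

/-- The compositions of `n`, as lists of their parts. -/
def compositions (n : ℕ) : Finset (List ℕ) :=
  Finset.univ.image (Composition.blocks (n := n))

lemma mem_compositions : α ∈ compositions n ↔ IsComposition α ∧ α.sum = n := by
  simp only [compositions, Finset.mem_image, Finset.mem_univ, true_and]
  constructor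
  · rintro ⟨c, rfl⟩
    exact ⟨fun _ ha => c.blocks_pos ha, c.blocks_sum⟩
  · rintro ⟨hα, hsum⟩
    exact ⟨⟨α, fun ha => hα _ ha, hsum⟩, rfl⟩

open Classical in
lemma FU_eq_sum_MU (α : List ℕ) : FU α = ∑ β ∈ compositions α.sum with RefinesC β α, MU β := by
  refine finsum_mem_eq_sum_of_inter_support_eq _ (Set.ext fun β => and_congr_left fun hβ => ?_)
  obtain ⟨m, hne⟩ := Function.ne_iff.1 hβ
  obtain ⟨rfl, hm⟩ : m.1 = β ∧ ValidMonoU m := by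
    by_contra h
    exact hne (if_neg h)
  rw [Finset.mem_coe, Finset.mem_filter, mem_compositions]
  exact ⟨fun h => ⟨⟨hm.2.2.2, RefinesC.sum_eq h⟩, h⟩, And.right⟩

open Classical in
lemma FU_apply (α : List ℕ) (m : MonoU) :
    FU α m = if ValidMonoU m ∧ RefinesC m.1 α then 1 else 0 := by
  rw [FU_eq_sum_MU, Finset.sum_apply]
  by_cases hm : ValidMonoU m
  · have hmem : m.1 ∈ compositions α.sum ∧ RefinesC m.1 α ↔ RefinesC m.1 α :=
      and_iff_right_of_imp fun h => mem_compositions.2 ⟨hm.2.2.2, h.sum_eq⟩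
    simp [MU, hm, hmem]
  · simp [MU, hm]

lemma length_of_mem_rowWords (hu : u ∈ rowWords α) : u.length = α.sum := by
  rw [(mem_rowWords.1 hu).1.length_eq, length_rowWord]

lemma runLengths_mem_compositions (hu : u ∈ rowWords α) :
    runLengths (· ≥ ·) u ∈ compositions α.sum :=
  mem_compositions.2
    ⟨isComposition_runLengths _ u, by rw [sum_runLengths, length_of_mem_rowWords hu]⟩

lemma ncard_isIT_monoOfU_eq (hα : IsComposition α) {m : MonoU} (hm : ValidMonoU m) :
    {f | IsIT α f ∧ monoOfU f = m}.ncard =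
      {u | u ∈ rowWords α ∧ RefinesC m.1 (runLengths (· ≥ ·) u)}.ncard := by
  have htableaux : {f | IsIT α f ∧ monoOfU f = m} =
      {f | IsIT α f ∧ f.flatten.Perm (blocks m.1 m.2)} :=
    Set.ext fun f => and_congr_right fun hf => monoOfU_eq_iff hf.2.2.2 hm
  have hpos : ∀ v ∈ blocks m.1 m.2, 1 ≤ v := fun v hv => hm.2.2.1 v (mem_of_mem_blocks hv)
  rw [htableaux, ← (bijOn_fillingOf hα hm.pairwise_blocks hpos).ncard_eq]
  congr 1
  ext u
  refine and_congr_right fun _ => ⟨fun ⟨hlen, hZ⟩ => ?_, fun href => ?_⟩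
  · rwa [pairwise_readsBefore_zip_iff hm.pairwise_blocks hlen, hm.runLengths_blocks] at hZ
  · have hlen : (blocks m.1 m.2).length = u.length := by
      rw [length_blocks hm.1, href.sum_eq, sum_runLengths]
    rw [pairwise_readsBefore_zip_iff hm.pairwise_blocks hlen, hm.runLengths_blocks]
    exact ⟨hlen, href⟩

lemma dualImmU_eq_sum_rowWords (hα : IsComposition α) :
    dualImmU α = ∑ u ∈ rowWords α, FU (runLengths (· ≥ ·) u) := by
  classical
  ext m
  rw [Finset.sum_apply, dualImmU]
  simp only [FU_apply]
  by_cases hm : ValidMonoU m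
  · simp only [hm, true_and, Finset.sum_boole]
    rw [ncard_isIT_monoOfU_eq hα hm, ← Set.ncard_coe_finset, Finset.coe_filter]
  · simp only [hm, false_and, if_false, Finset.sum_const_zero, Nat.cast_eq_zero]
    convert Set.ncard_empty Filling
    refine Set.eq_empty_of_forall_notMem ?_
    rintro f ⟨-, rfl⟩
    exact hm (validMonoU_monoOfU f)

lemma rowOf_fillingOf {p : ℕ × ℕ} (hZ : (Z.map Prod.fst).Nodup) (hp : p ∈ Z) (hk : p.2 < k) :
    rowOf (fillingOf k Z) p.1 = p.2 := by
  have hcontains : ∀ r, (row Z r).contains p.1 ↔ r = p.2 := fun r => by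
    rw [List.contains_iff_mem, mem_row]
    refine ⟨fun h => ?_, fun h => h ▸ hp⟩
    exact congrArg Prod.snd (List.inj_on_of_nodup_map hZ h hp rfl)
  rw [rowOf, List.findIdx_eq (by simpa [fillingOf] using hk)]
  simp only [fillingOf, List.getElem_map, List.getElem_range, hcontains, true_and,
    Bool.eq_false_iff, ne_eq]
  exact fun j hj => hj.ne

lemma descComp_fillingOf (hZ : Z.map Prod.fst = List.range' 1 Z.length) (hk : ∀ p ∈ Z, p.2 < k) :
    descComp (fillingOf k Z) = runLengths (· ≥ ·) (Z.map Prod.snd) := by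
  have hn : nBoxes (fillingOf k Z) = Z.length := by
    rw [nBoxes, (flatten_fillingOf_perm hk).length_eq, List.length_map]
  have hrows : (List.range' 1 Z.length).map (rowOf (fillingOf k Z)) = Z.map Prod.snd := by
    rw [← hZ, List.map_map]
    exact List.map_congr_left fun p hp =>
      rowOf_fillingOf (hZ ▸ List.nodup_range') hp (hk p hp)
  rw [descComp_eq_runLengths, hn, ← hrows, runLengths_map]

lemma isStandardF_iff (hf : f.map List.length = α) :
    IsStandardF f ↔ f.flatten.Perm (List.range' 1 α.sum) := by
  rw [IsStandardF, nBoxes, List.length_flatten, hf]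

lemma bijOn_fillingOf_isStandardF (hα : IsComposition α) :
    Set.BijOn (fun u => fillingOf α.length ((List.range' 1 α.sum).zip u)) (rowWords α)
      {f | IsIT α f ∧ IsStandardF f} := by
  have hentries : (List.range' 1 α.sum).Pairwise (· < ·) := List.pairwise_lt_range'
  have hwords : (rowWords α : Set (List ℕ)) = {u | u ∈ rowWords α ∧
      (List.range' 1 α.sum).length = u.length ∧
      ((List.range' 1 α.sum).zip u).Pairwise ReadsBefore} := by
    refine Set.ext fun u => (and_iff_left_of_imp fun hu => ?_).symm
    have hlen : (List.range' 1 α.sum).length = u.length := by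
      rw [List.length_range', length_of_mem_rowWords hu]
    rw [← List.map_fst_zip hlen.le, List.pairwise_map] at hentries
    exact ⟨hlen, hentries.imp Or.inl⟩
  have htableaux : {f | IsIT α f ∧ IsStandardF f} =
      {f | IsIT α f ∧ f.flatten.Perm (List.range' 1 α.sum)} :=
    Set.ext fun f => and_congr_right fun hf => isStandardF_iff hf.1
  rw [hwords, htableaux]
  exact bijOn_fillingOf hα (hentries.imp le_of_lt) fun v hv => (List.mem_range'_1.1 hv).1

lemma LU_eq_card (hα : IsComposition α) (β : List ℕ) :
    LU α β = ({u ∈ rowWords α | runLengths (· ≥ ·) u = β} : Finset (List ℕ)).card := by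
  have hbij := (bijOn_fillingOf_isStandardF hα).subset_right
    (r := {f | IsIT α f ∧ IsStandardF f ∧ descComp f = β}) fun f hf => ⟨hf.1, hf.2.1⟩
  rw [LU, ← hbij.ncard_eq, ← Set.ncard_coe_finset, Finset.coe_filter]
  congr 1
  refine Set.ext fun u => and_congr_right fun hu => ?_
  have hlen : (List.range' 1 α.sum).length = u.length := by
    rw [List.length_range', length_of_mem_rowWords hu]
  have hsnd := List.map_snd_zip hlen.ge
  have hdesc : descComp (fillingOf α.length ((List.range' 1 α.sum).zip u)) =
      runLengths (· ≥ ·) u := by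
    rw [descComp_fillingOf _ (lt_length_of_mem (by rwa [hsnd])), hsnd]
    rw [List.map_fst_zip hlen.le, List.length_zip, ← hlen, min_self, List.length_range']
  obtain ⟨hIT, hstd⟩ := (bijOn_fillingOf_isStandardF hα).mapsTo hu
  rw [← hdesc]
  exact ⟨fun h => h.2.2, fun h => ⟨hIT, hstd, h⟩⟩

lemma dualImmU_eq_sum_compositions (hα : IsComposition α) :
    dualImmU α = ∑ β ∈ compositions α.sum, (LU α β : ℚ) • FU β := by
  rw [dualImmU_eq_sum_rowWords hα,
    ← Finset.sum_fiberwise_of_maps_to fun u hu => runLengths_mem_compositions hu]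
  refine Finset.sum_congr rfl fun β _ => ?_
  rw [LU_eq_card hα, Finset.sum_congr rfl fun u hu => congrArg FU (Finset.mem_filter.1 hu).2,
    Finset.sum_const, Nat.cast_smul_eq_nsmul]

lemma LU_self (hα : IsComposition α) : LU α α = 1 := by
  rw [LU_eq_card hα, filter_rowWords_runLengths_eq_self hα, Finset.card_singleton]

lemma exists_mem_rowWords_of_LU_ne_zero (hα : IsComposition α) (h : LU α β ≠ 0) :
    ∃ u ∈ rowWords α, runLengths (· ≥ ·) u = β := by
  rw [LU_eq_card hα, Finset.card_ne_zero] at h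
  obtain ⟨u, hu⟩ := h
  exact ⟨u, Finset.mem_filter.1 hu⟩

lemma IsEdgeU.mem_compositions (hα : IsComposition α) (h : IsEdgeU α β) :
    β ∈ compositions α.sum := by
  obtain ⟨u, hu, rfl⟩ := exists_mem_rowWords_of_LU_ne_zero hα h.2
  exact runLengths_mem_compositions hu

lemma IsEdgeU.sum_rowWord_lt (hα : IsComposition α) (h : IsEdgeU α β) :
    (rowWord α).sum < (rowWord β).sum := by
  obtain ⟨u, hu, rfl⟩ := exists_mem_rowWords_of_LU_ne_zero hα h.2
  exact sum_rowWord_lt_of_runLengths_ne hα hu h.1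

lemma wellFoundedOn_isEdgeU (n : ℕ) :
    (compositions n : Set (List ℕ)).WellFoundedOn (flip IsEdgeU) := by
  have hwf := (compositions n).wellFoundedOn (r := (fun α => (rowWord α).sum) ⁻¹'o (· > ·))
  exact hwf.mono' fun β _ α hα h => h.sum_rowWord_lt (Uncolored.mem_compositions.1 hα).1

open Classical in
lemma dualImmU_eq_FU_add_sum (hα : IsComposition α) :
    dualImmU α = FU α + ∑ β ∈ compositions α.sum with IsEdgeU α β, (LU α β : ℚ) • FU β := by
  have hmem : α ∈ compositions α.sum := mem_compositions.2 ⟨hα, rfl⟩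
  rw [dualImmU_eq_sum_compositions hα, ← Finset.add_sum_erase _ _ hmem, LU_self hα, Nat.cast_one,
    one_smul]
  congr 1
  refine (Finset.sum_subset (fun β hβ => ?_) fun β hβ hedge => ?_).symm
  · rw [Finset.mem_filter] at hβ
    exact Finset.mem_erase.2 ⟨hβ.2.1, hβ.1⟩
  · rw [Finset.mem_erase] at hβ
    have hL : LU α β = 0 := by
      by_contra hL
      exact hedge (Finset.mem_filter.2 ⟨hβ.2, hβ.1, hL⟩)
    rw [hL, Nat.cast_zero, zero_smul]

end Expansion

end ColoredImm.Uncolored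

namespace ColoredImm

open Uncolored in
/-- For a composition `α` of `n`, the fundamental quasisymmetric function
expands into the dual immaculate basis as `F_α = Σ_β L⁻¹_{α,β} 𝔖*_β`, summed over all
compositions `β` reachable from `α` in the immaculate descent graph `𝔇^n`, where
`L⁻¹_{α,β} = Σ_𝒫 (-1)^{ℓ(𝒫)} prod(𝒫)` over directed paths `𝒫` from `α` to `β`. -/
theorem statement8 (α : List ℕ) (hα : IsComposition α) :
    FU α = ∑ᶠ β ∈ {β : List ℕ | (PathsU α β).Nonempty}, LinvU α β • dualImmU β := by
  classical
  have hclosed : ∀ β ∈ compositions α.sum, ∀ γ, IsEdgeU β γ → γ ∈ compositions α.sum := by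
    intro β hβ γ hedge
    rw [mem_compositions] at hβ
    exact hβ.2 ▸ hedge.mem_compositions hβ.1
  have hexpand : ∀ β ∈ compositions α.sum, dualImmU β =
      FU β + ∑ γ ∈ compositions α.sum with IsEdgeU β γ, (LU β γ : ℚ) • FU γ := by
    intro β hβ
    rw [mem_compositions] at hβ
    exact hβ.2 ▸ dualImmU_eq_FU_add_sum hβ.1
  exact eq_finsum_pathSum_smul hclosed (wellFoundedOn_isEdgeU α.sum) hexpand
    (mem_compositions.2 ⟨hα, rfl⟩)

end ColoredImm
end

section
/- For sentences I=(w_1,…,w_k) and J=(v_1,…,v_h), the right perp operator acts on the complete homogeneous basis of NSym_A by M_I^⊸(H_J) = Σ_K H_{(J/_R K)~}, where the sum runs over all weak sentences K such that K̃ = I and K ⊆_R J, and (J/_R K)~ denotes the flattening of the weak sentence J/_R K. -/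
open scoped BigOperators

namespace ColoredImm

/-!
Expanding the perp operator in the basis `{H_L}`, the coefficient of `H_L` in `F^⊸(H_J)` is the
coefficient of `x_{v_1,1} ⋯ x_{v_h,h}` in `M_L · F`. That coefficient is a sum over the ways of
cutting each `v_i` into a prefix and a suffix. The suffixes form a weak sentence `K ⊆_R J`, the
prefixes form `J/_R K`, and `M_L` forces `L` to be the flattening of `J/_R K`. Summing over `L`
leaves one term for each `K`, namely `H_{(J/_R K)~}` weighted by the coefficient in `F` of the
monomial with words `K`. For `F = M_I` this weight is `1` if `K` flattens to `I` and `0` otherwise.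
-/

section Lists

variable {α : Type*}

theorem tails_eq_map_drop (w : List α) :
    w.tails = (List.range (w.length + 1)).map fun t => w.drop t :=
  List.ext_getElem (by simp) fun t _ _ => by simp

theorem nodup_tails (w : List α) : w.tails.Nodup := by
  rw [tails_eq_map_drop]
  refine List.nodup_range.map_on fun s hs t ht h => ?_
  have hlen := congrArg List.length h
  simp only [List.mem_range, List.length_drop] at hs ht hlen
  omega

theorem nodup_sections {L : List (List α)} (hL : ∀ l ∈ L, l.Nodup) : L.sections.Nodup := by
  induction L with
  | nil => simp [List.sections]
  | cons l L ih =>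
    obtain ⟨hl, hL⟩ := List.forall_mem_cons.1 hL
    refine List.nodup_flatMap.2 ⟨fun s _ => hl.map fun _ _ h => (List.cons.inj h).1, ?_⟩
    refine (ih hL).imp fun {s t} hst => ?_
    simp only [Function.onFun, List.disjoint_left, List.mem_map]
    rintro _ ⟨a, _, rfl⟩ ⟨b, _, hb⟩
    exact hst (List.cons.inj hb).2.symm

end Lists

section Sums

variable {ι κ R V : Type*} [DecidableEq ι] [Semiring R] [AddCommMonoid V] [Module R V]

theorem finsum_mem_finsum_mem_ite_smul {S : Set κ} {T : Set ι} (hS : S.Finite) {g : κ → ι}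
    (hg : Set.MapsTo g S T) (a : κ → R) (b : ι → V) :
    ∑ᶠ i ∈ T, (∑ᶠ k ∈ S, if g k = i then a k else 0) • b i = ∑ᶠ k ∈ S, a k • b (g k) := by
  lift S to Finset κ using hS
  have hsupp : T ∩ Function.support (fun i => (∑ k ∈ S, if g k = i then a k else 0) • b i) ⊆
      S.image g := by
    rintro i ⟨_, hi⟩
    obtain ⟨k, hk, hne⟩ := Finset.exists_ne_zero_of_sum_ne_zero (left_ne_zero_of_smul hi)
    exact Finset.mem_coe.2 (Finset.mem_image.2 ⟨k, hk, (ite_ne_right_iff.1 hne).1⟩)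
  have himage : (S.image g : Set ι) ⊆ T := by
    rw [Finset.coe_image]
    exact hg.image_subset
  simp only [finsum_mem_coe_finset]
  rw [finsum_mem_eq_sum_of_subset _ hsupp himage]
  simp only [Finset.sum_smul, ite_smul, zero_smul]
  rw [Finset.sum_comm]
  refine Finset.sum_congr rfl fun k hk => ?_
  rw [Finset.sum_ite_eq, if_pos (Finset.mem_image_of_mem g hk)]

end Sums

section Perp

variable {A : Type*}

theorem rightContained_iff_forall₂ {K J : Sentence A} :
    RightContained K J ↔ List.Forall₂ (· <:+ ·) K J := by
  rw [List.forall₂_iff_get]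
  refine and_congr_right fun hlen => ⟨fun h i hK hJ => ?_, fun h i hJ => ?_⟩
  · simpa [hK, hJ] using h i hJ
  · simpa [hlen, hJ] using h i (hlen ▸ hJ) hJ

theorem rightContained_iff_mem_sections {K J : Sentence A} :
    RightContained K J ↔ K ∈ (J.map List.tails).sections := by
  simp only [rightContained_iff_forall₂, List.mem_sections, List.forall₂_map_right_iff,
    List.mem_tails]

theorem finite_setOf_rightContained (J : Sentence A) : {K | RightContained K J}.Finite := by
  simp only [rightContained_iff_mem_sections]
  exact List.finite_toSet _

theorem finsum_mem_rightContained {M : Type*} [AddCommMonoid M] (J : Sentence A)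
    (f : Sentence A → M) :
    ∑ᶠ K ∈ {K | RightContained K J}, f K = ((J.map List.tails).sections.map f).sum := by
  classical
  have hnodup : (J.map List.tails).sections.Nodup :=
    nodup_sections (by simp [nodup_tails])
  rw [← List.sum_toFinset f hnodup, ← finsum_mem_coe_finset]
  simp only [rightContained_iff_mem_sections, List.coe_toFinset]

theorem splitsOf_eq_map_sections (J : Sentence A) :
    splitsOf J = (J.map List.tails).sections.map fun K => (rightQuot J K, K) := by
  induction J with
  | nil => rfl
  | cons w J ih =>
    simp only [splitsOf, ih, List.map_cons, List.sections, tails_eq_map_drop, List.map_flatMap,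
      List.map_map, ← List.flatMap_def]
    refine List.flatMap_congr fun K _ => List.map_congr_left fun t ht => ?_
    have hsub : w.length - (w.length - t) = t := by grind
    simp [rightQuot, hsub]

theorem mulQ_apply (F G : QSymA A) (J : Sentence A) (js : List ℕ) :
    mulQ F G (J, js) = ∑ᶠ K ∈ {K | RightContained K J},
      F (restrictMono (rightQuot J K) js) * G (restrictMono K js) := by
  rw [finsum_mem_rightContained, mulQ, splitsOf_eq_map_sections, List.map_map]
  rfl

theorem isSentence_flattenWS (K : Sentence A) : IsSentence (flattenWS K) := by
  simp [IsSentence, flattenWS]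

theorem restrictMono_fst {ws : Sentence A} {js : List ℕ} (h : ws.length ≤ js.length) :
    (restrictMono ws js).1 = flattenWS ws := by
  conv_rhs => rw [← List.map_fst_zip h]
  rw [flattenWS, List.filter_map]
  rfl

theorem restrictMono_snd_sublist (ws : Sentence A) (js : List ℕ) :
    (restrictMono ws js).2.Sublist js := by
  have hzip : ((ws.zip js).map Prod.snd).Sublist js := by
    rw [List.zip_eq_zip_take_min, List.map_snd_zip (by simp)]
    exact List.take_sublist _ _
  exact (List.filter_sublist.map _).trans hzip

theorem validMono_restrictMono (ws : Sentence A) {js : List ℕ} (hjs : js.Pairwise (· < ·))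
    (hpos : ∀ j ∈ js, 1 ≤ j) : ValidMono (restrictMono ws js) := by
  have hsub := restrictMono_snd_sublist ws js
  refine ⟨by simp [restrictMono], (hjs.sublist hsub).isChain,
    fun j hj => hpos j (hsub.subset hj), ?_⟩
  simp [restrictMono]

open Classical in
theorem MQ_restrictMono_range' (I K : Sentence A) {n : ℕ} (hn : K.length ≤ n) :
    MQ I (restrictMono K (List.range' 1 n)) = if flattenWS K = I then 1 else 0 := by
  have hvalid : ValidMono (restrictMono K (List.range' 1 n)) :=
    validMono_restrictMono K List.pairwise_lt_range' fun j hj => (List.mem_range'_1.1 hj).1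
  simp only [MQ, restrictMono_fst (hn.trans_eq List.length_range'.symm), hvalid, and_true]

theorem pairNQ_Hd {J : Sentence A} (hJ : IsSentence J) (F : QSymA A) :
    pairNQ (Hd J) F = F (J, List.range' 1 J.length) := by
  rw [pairNQ, finsum_eq_single _ J fun I hI => by simp [Hd, hI]]
  simp [Hd, hJ]

open Classical in
theorem pairNQ_Hd_mulQ_MQ {J : Sentence A} (hJ : IsSentence J) (L : Sentence A) (F : QSymA A) :
    pairNQ (Hd J) (mulQ (MQ L) F) = ∑ᶠ K ∈ {K | RightContained K J},
      if flattenWS (rightQuot J K) = L then F (restrictMono K (List.range' 1 J.length)) else 0 := by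
  have hlen (K : Sentence A) : (rightQuot J K).length ≤ J.length := by simp [rightQuot]
  simp only [pairNQ_Hd hJ, mulQ_apply, MQ_restrictMono_range' L _ (hlen _), ite_mul, one_mul,
    zero_mul]

theorem rperp_Hd {J : Sentence A} (hJ : IsSentence J) (F : QSymA A) :
    rperp F (Hd J) = ∑ᶠ K ∈ {K | RightContained K J},
      F (restrictMono K (List.range' 1 J.length)) • Hd (flattenWS (rightQuot J K)) := by
  classical
  simp only [rperp, pairNQ_Hd_mulQ_MQ hJ]
  exact finsum_mem_finsum_mem_ite_smul (T := {L | IsSentence L}) (finite_setOf_rightContained J)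
    (fun K _ => isSentence_flattenWS (rightQuot J K)) _ Hd

end Perp

/-- For sentences `I` and `J`, the right perp operator acts on the
complete homogeneous basis by `M_I^⊸(H_J) = Σ_K H_{(J/_R K)~}`, the sum running over all
weak sentences `K` with flattening `I` that are right-contained in `J`. -/
theorem statement9 {A : Type*} (I J : Sentence A) (hI : IsSentence I) (hJ : IsSentence J) :
    rperp (MQ I) (Hd J) =
      ∑ᶠ K ∈ {K : Sentence A | flattenWS K = I ∧ RightContained K J},
        Hd (flattenWS (rightQuot J K)) := by
  rw [rperp_Hd hJ]
  refine finsum_congr fun K => ?_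
  by_cases hK : RightContained K J
  · by_cases hflat : flattenWS K = I <;> simp [hK, hflat, MQ_restrictMono_range' I K hK.1.le]
  · simp [hK]

end ColoredImm
end
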